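/- Let N ≥ 1 be an integer, γ > 0 a real number, and t > 0 a real number satisfying γ/t > 2γ(N−1) + 1. Define W_γ(N,t) as the ratio (∫_{ℝ^N} ∏_{1≤i<j≤N} |λ_j − λ_i|^{2γ} · ∏_{j=1}^N e^{−iγλ_j/√t} (1 − i√t·λ_j)^{−γ/t} dλ) / (∫_{ℝ^N} ∏_{1≤i<j≤N} |λ_j − λ_i|^{2γ} · e^{−(γ/2)Σ_{j=1}^N λ_j²} dλ). Then W_γ(N,t) = ( √(2π) · e^{−γ/t} · (γ/t)^{γ/t − ((N−1)γ+1)/2} )^N · ∏_{j=0}^{N−1} 1/Γ(γ/t − γj). -/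

import Mathlib

open MeasureTheory

/-- `W_γ(N,t)`: the ratio of the Mehta-type integral
`∫_{ℝ^N} ∏_{i<j} |λ_j - λ_i|^{2γ} ∏_j e^{-iγλ_j/√t} (1 - i√t λ_j)^{-γ/t} dλ`
to the Gaussian integral
`∫_{ℝ^N} ∏_{i<j} |λ_j - λ_i|^{2γ} e^{-(γ/2)∑_j λ_j²} dλ`. -/
noncomputable def W (γ : ℝ) (N : ℕ) (t : ℝ) : ℂ :=
    (∫ l : Fin N → ℝ,
        (∏ i : Fin N, ∏ j ∈ Finset.Ioi i, ((|l j - l i| ^ (2 * γ) : ℝ) : ℂ)) *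
          ∏ j : Fin N,
            Complex.exp (-(Complex.I * γ * (l j) / Real.sqrt t)) *
              (1 - Complex.I * Real.sqrt t * (l j)) ^ ((-(γ / t) : ℝ) : ℂ)) /
      ((∫ l : Fin N → ℝ,
          (∏ i : Fin N, ∏ j ∈ Finset.Ioi i, |l j - l i| ^ (2 * γ)) *
            Real.exp (-(γ / 2) * ∑ j, (l j) ^ 2) : ℝ) : ℂ)

/-- Regularised Vandermonde weight. -/
noncomputable def wt {N : ℕ} (γ ε : ℝ) (u : Fin N → ℝ) : ℝ :=
  ∏ i : Fin N, ∏ j ∈ ({i}ᶜ : Finset (Fin N)), ((u j - u i) ^ 2 + ε) ^ (γ / 2)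

/-- One-variable factor `z^{-b} e^z`. -/
noncomputable def Efun (b : ℝ) (z : ℂ) : ℂ := z ^ ((-b : ℝ) : ℂ) * Complex.exp z

/-- The dominating function. -/
noncomputable def Dom {N : ℕ} (γ b : ℝ) (u : Fin N → ℝ) : ℝ :=
  ∏ j : Fin N, (1 + (u j) ^ 2) ^ (γ * ((N : ℝ) - 1) - b / 2)

lemma wt_zero_eq {N : ℕ} (γ : ℝ) (u : Fin N → ℝ) :
    wt γ 0 u = ∏ i : Fin N, ∏ j ∈ Finset.Ioi i, |u j - u i| ^ (2 * γ) := by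
  unfold wt
  rw [← Finset.prod_prod_Ioi_mul_eq_prod_prod_off_diag]
  refine Finset.prod_congr rfl fun i _ => Finset.prod_congr rfl fun j _ => ?_
  have h : (u i - u j) ^ 2 = (u j - u i) ^ 2 := by ring
  rw [h, add_zero, ← sq_abs, ← Real.mul_rpow (by positivity) (by positivity), ← Real.rpow_natCast,
    ← Real.rpow_add_of_nonneg (by positivity) (by norm_num) (by norm_num),
    ← Real.rpow_mul (by positivity)]
  congr 1; push_cast; ring

lemma wt_nonneg {N : ℕ} (γ : ℝ) {ε : ℝ} (hε : 0 ≤ ε) (u : Fin N → ℝ) : 0 ≤ wt γ ε u :=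
  Finset.prod_nonneg fun i _ => Finset.prod_nonneg fun j _ => by positivity

lemma wt_continuous {N : ℕ} {γ : ℝ} (hγ : 0 < γ) (ε : ℝ) :
    Continuous (wt γ ε : (Fin N → ℝ) → ℝ) := by
  unfold wt
  refine continuous_finsetProd _ fun i _ => continuous_finsetProd _ fun j _ => ?_
  refine Continuous.rpow_const (by fun_prop) fun x => Or.inr (by positivity)

lemma wt_tendsto {N : ℕ} {γ : ℝ} (hγ : 0 < γ) (u : Fin N → ℝ) :
    Filter.Tendsto (fun ε => wt γ ε u) (nhdsWithin 0 (Set.Ioi 0)) (nhds (wt γ 0 u)) := by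
  apply tendsto_nhdsWithin_of_tendsto_nhds
  apply Continuous.tendsto (f := fun ε => wt γ ε u)
  unfold wt
  refine continuous_finsetProd _ fun i _ => continuous_finsetProd _ fun j _ => ?_
  refine Continuous.rpow_const (by fun_prop) fun x => Or.inr (by positivity)

lemma wt_perm {N : ℕ} (γ ε : ℝ) (σ : Equiv.Perm (Fin N)) (u : Fin N → ℝ) :
    wt γ ε (u ∘ σ) = wt γ ε u := by
  unfold wt
  rw [← Equiv.prod_comp σ (fun i => ∏ j ∈ ({i}ᶜ : Finset (Fin N)), ((u j - u i) ^ 2 + ε) ^ (γ / 2))]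
  refine Finset.prod_congr rfl fun i _ => ?_
  refine Finset.prod_bij (fun j _ => σ j) ?_ ?_ ?_ ?_
  · intro j hj; simpa using hj
  · intro a _ b _ h; exact σ.injective h
  · intro b hb
    refine ⟨σ.symm b, ?_, by simp⟩
    simp only [Finset.mem_compl, Finset.mem_singleton] at hb ⊢
    intro h; apply hb; rw [← h]; simp
  · intro j _; rfl

lemma wt_add_const {N : ℕ} (γ ε : ℝ) (c : ℝ) (u : Fin N → ℝ) :
    wt γ ε (u + fun _ => c) = wt γ ε u := by
  unfold wt
  refine Finset.prod_congr rfl fun i _ => Finset.prod_congr rfl fun j _ => ?_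
  simp

lemma wt_smul {N : ℕ} (γ : ℝ) {c : ℝ} (hc : 0 < c) (u : Fin N → ℝ) :
    wt γ 0 (c • u) = c ^ (γ * N * ((N : ℝ) - 1)) * wt γ 0 u := by
  have h : ∀ i j, (((c • u) j - (c • u) i) ^ 2 + 0) ^ (γ / 2) =
      c ^ γ * ((u j - u i) ^ 2 + 0) ^ (γ / 2) := by
    intro i j
    have : ((c • u) j - (c • u) i) ^ 2 + 0 = c ^ 2 * ((u j - u i) ^ 2 + 0) := by
      simp; ring
    rw [this, Real.mul_rpow (by positivity) (by positivity), ← Real.rpow_natCast,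
      ← Real.rpow_mul hc.le]
    congr 2; push_cast; ring
  unfold wt
  simp_rw [h, Finset.prod_mul_distrib, Finset.prod_const]
  congr 1
  simp only [Fintype.card_fin, Finset.card_compl, Finset.card_singleton]
  rcases Nat.eq_zero_or_pos N with h0 | h0
  · subst h0; simp
  rw [Finset.prod_const, Finset.card_univ, Fintype.card_fin, ← Real.rpow_natCast,
    ← Real.rpow_natCast, ← Real.rpow_mul hc.le, ← Real.rpow_mul hc.le]
  congr 1
  push_cast [Nat.cast_sub (Nat.succ_le_of_lt h0)]; ring

lemma wt_bound {N : ℕ} {γ : ℝ} (hγ : 0 < γ) :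
    ∃ C : ℝ, 0 < C ∧ ∀ ε, 0 ≤ ε → ε ≤ 1 → ∀ u : Fin N → ℝ,
      wt γ ε u ≤ C * ∏ j, (1 + (u j) ^ 2) ^ (γ * ((N : ℝ) - 1)) := by
  refine ⟨∏ i : Fin N, ∏ j ∈ ({i}ᶜ : Finset (Fin N)), (2 : ℝ) ^ (γ / 2), ?_, ?_⟩
  · exact Finset.prod_pos fun i _ => Finset.prod_pos fun j _ => by positivity
  intro ε h0 h1 u
  have key : ∏ i : Fin N, ∏ j ∈ ({i}ᶜ : Finset (Fin N)),
      ((1 + u j ^ 2) ^ (γ / 2) * (1 + u i ^ 2) ^ (γ / 2)) =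
      ∏ j, (1 + (u j) ^ 2) ^ (γ * ((N : ℝ) - 1)) := by
    simp_rw [Finset.prod_mul_distrib]
    have h2 : ∏ i : Fin N, ∏ j ∈ ({i}ᶜ : Finset (Fin N)), (1 + u j ^ 2) ^ (γ / 2) =
        ∏ i : Fin N, ∏ j ∈ ({i}ᶜ : Finset (Fin N)), (1 + u i ^ 2) ^ (γ / 2) := by
      rw [Finset.prod_comm' (s' := fun i => ({i}ᶜ : Finset (Fin N))) (t' := Finset.univ)]
      intro x y; simp [eq_comm]
    rw [h2, ← Finset.prod_mul_distrib]
    refine Finset.prod_congr rfl fun i _ => ?_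
    have hp : (0 : ℝ) < 1 + u i ^ 2 := by positivity
    rw [Finset.prod_const, ← Real.rpow_natCast, ← Real.rpow_mul hp.le, ← Real.rpow_add hp]
    congr 1
    have : 1 ≤ N := Nat.succ_le_of_lt (lt_of_le_of_lt (Nat.zero_le _) i.2)
    simp only [Fintype.card_fin, Finset.card_compl, Finset.card_singleton]
    push_cast [Nat.cast_sub this]; ring
  rw [← key]
  unfold wt
  simp_rw [← Finset.prod_mul_distrib]
  refine Finset.prod_le_prod (fun i _ => Finset.prod_nonneg fun j _ => by positivity) fun i _ => ?_
  refine Finset.prod_le_prod (fun j _ => by positivity) fun j _ => ?_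
  rw [← Real.mul_rpow (by positivity) (by positivity), ← Real.mul_rpow (by positivity) (by positivity)]
  refine Real.rpow_le_rpow (by positivity) ?_ (by positivity)
  nlinarith [sq_nonneg (u j + u i), sq_nonneg (u j * u i)]

lemma Dom_integrable {N : ℕ} {γ b : ℝ} (hb : 2 * γ * ((N : ℝ) - 1) + 1 < b) :
    Integrable (Dom γ b : (Fin N → ℝ) → ℝ) := by
  unfold Dom
  refine Integrable.fintype_prod (f := fun _ (x : ℝ) => (1 + x ^ 2) ^ (γ * ((N : ℝ) - 1) - b / 2))
    fun i => ?_
  have := integrable_rpow_neg_one_add_norm_sq (E := ℝ) (μ := volume)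
    (r := b - 2 * γ * ((N : ℝ) - 1)) (by simp; linarith)
  convert this using 2 with x
  rw [Real.norm_eq_abs, sq_abs]
  congr 1; ring

lemma E_bound {r : ℝ} (R b : ℝ) (hr : 0 < r) (hb : 0 ≤ b) :
    ∃ K : ℝ, 0 < K ∧ ∀ s : ℂ, r ≤ s.re → s.re ≤ R → |s.im| ≤ R → ∀ u : ℝ,
      ‖Efun b (s - Complex.I * u)‖ ≤ K * (1 + u ^ 2) ^ (-b / 2) := by
  set K0 : ℝ := 2 + (1 + 2 * R ^ 2) / r ^ 2 with hK0
  have hK0p : 0 < K0 := by positivity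
  refine ⟨K0 ^ (b / 2) * Real.exp R, by positivity, ?_⟩
  intro s h1 h2 h3 u
  have hre : (s - Complex.I * u).re = s.re := by simp
  have him : (s - Complex.I * u).im = s.im - u := by simp
  have hne : (s - Complex.I * u) ≠ 0 := by
    intro h; rw [h] at hre; simp at hre; linarith
  have hsq : ‖s - Complex.I * u‖ ^ 2 = s.re ^ 2 + (s.im - u) ^ 2 := by
    rw [← Complex.normSq_eq_norm_sq, Complex.normSq_apply, hre, him]; ring
  have hlow : 1 + u ^ 2 ≤ K0 * ‖s - Complex.I * u‖ ^ 2 := by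
    rw [hsq]
    have e1 : s.im ^ 2 ≤ R ^ 2 := by
      rw [← sq_abs]; gcongr
    have e2 : (1 + 2 * R ^ 2) ≤ (1 + 2 * R ^ 2) / r ^ 2 * s.re ^ 2 := by
      rw [div_mul_eq_mul_div, le_div_iff₀ (by positivity)]
      gcongr
    have e3 : 0 ≤ (1 + 2 * R ^ 2) / r ^ 2 * (s.im - u) ^ 2 := by positivity
    rw [hK0]
    nlinarith [sq_nonneg (2 * s.im - u), sq_nonneg s.re]
  unfold Efun
  rw [norm_mul, Complex.norm_cpow_real, Complex.norm_exp, hre]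
  have hpos : 0 < ‖s - Complex.I * u‖ := norm_pos_iff.mpr hne
  have e4 : ‖s - Complex.I * u‖ ^ (-b) ≤ K0 ^ (b / 2) * (1 + u ^ 2) ^ (-b / 2) := by
    have : ‖s - Complex.I * u‖ ^ (-b) = (‖s - Complex.I * u‖ ^ 2) ^ (-b / 2) := by
      rw [← Real.rpow_natCast, ← Real.rpow_mul hpos.le]; congr 1; push_cast; ring
    rw [this]
    have h5 : K0⁻¹ * (1 + u ^ 2) ≤ ‖s - Complex.I * u‖ ^ 2 := by
      rw [inv_mul_le_iff₀ hK0p]; exact hlow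
    calc _ ≤ (K0⁻¹ * (1 + u ^ 2)) ^ (-b / 2) :=
          Real.rpow_le_rpow_of_nonpos (by positivity) h5 (by linarith)
      _ = _ := by
          rw [Real.mul_rpow (by positivity) (by positivity), Real.inv_rpow hK0p.le,
            ← Real.rpow_neg hK0p.le]
          congr 2; ring
  calc _ ≤ K0 ^ (b / 2) * (1 + u ^ 2) ^ (-b / 2) * Real.exp R := by gcongr
    _ = _ := by ring

lemma mem_slit {s : ℂ} (hs : 0 < s.re) (u : ℝ) : s - Complex.I * u ∈ Complex.slitPlane := by
  left; simpa using hs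

lemma E_continuous (b : ℝ) {s : ℂ} (hs : 0 < s.re) :
    Continuous fun u : ℝ => Efun b (s - Complex.I * u) := by
  unfold Efun
  refine Continuous.mul ?_ (by fun_prop)
  exact Continuous.cpow (by fun_prop) continuous_const fun u => mem_slit hs u

lemma E_hasDerivAt (b : ℝ) {z : ℂ} (hz : z ∈ Complex.slitPlane) :
    HasDerivAt (Efun b) (Efun b z - b * Efun (b + 1) z) z := by
  unfold Efun
  have h1 : HasDerivAt (fun z : ℂ => z ^ ((-b : ℝ) : ℂ))
    (((-b : ℝ) : ℂ) * z ^ (((-b : ℝ) : ℂ) - 1)) z := by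
      simpa using (hasDerivAt_id z).cpow_const hz (c := ((-b : ℝ) : ℂ))
  convert! h1.mul (Complex.hasDerivAt_exp z) using 1
  have : ((-(b + 1) : ℝ) : ℂ) = ((-b : ℝ) : ℂ) - 1 := by push_cast; ring
  rw [this]; push_cast; ring

lemma E_succ (b : ℝ) {z : ℂ} (hz : z ≠ 0) : z * Efun (b + 1) z = Efun b z := by
  unfold Efun
  have : ((-b : ℝ) : ℂ) = ((-(b + 1) : ℝ) : ℂ) + 1 := by push_cast; ring
  rw [this, Complex.cpow_add _ _ hz, Complex.cpow_one]; ring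

lemma Dom_nonneg {N : ℕ} (γ b : ℝ) (u : Fin N → ℝ) : 0 ≤ Dom γ b u :=
  Finset.prod_nonneg fun i _ => by positivity

lemma prod_E_bound {N : ℕ} {γ : ℝ} (a : ℝ) (C : ℝ) (e : Fin N → ℝ → ℂ) (K : ℝ)
    (he : ∀ j x, ‖e j x‖ ≤ K * (1 + x ^ 2) ^ (-a / 2)) (w : ℝ) (u : Fin N → ℝ) (hC : 0 ≤ C)
    (hw : |w| ≤ C * ∏ j, (1 + (u j) ^ 2) ^ (γ * ((N : ℝ) - 1))) :
    ‖(w : ℂ) * ∏ j, e j (u j)‖ ≤ C * K ^ N * Dom γ a u := by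
  rw [norm_mul, norm_prod, Complex.norm_real, Real.norm_eq_abs]
  have h1 : ∏ j, ‖e j (u j)‖ ≤ ∏ j, (K * (1 + (u j) ^ 2) ^ (-a / 2)) :=
    Finset.prod_le_prod (fun _ _ => norm_nonneg _) fun j _ => he j (u j)
  calc _ ≤ (C * ∏ j, (1 + (u j) ^ 2) ^ (γ * ((N : ℝ) - 1))) * ∏ j, (K * (1 + (u j) ^ 2) ^ (-a / 2)) := by
        gcongr
    _ = _ := by
        rw [Finset.prod_mul_distrib, Finset.prod_const, Finset.card_univ, Fintype.card_fin]
        have : Dom γ a u = (∏ j, (1 + (u j) ^ 2) ^ (γ * ((N : ℝ) - 1))) *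
            ∏ j, (1 + (u j) ^ 2) ^ (-a / 2) := by
          unfold Dom
          rw [← Finset.prod_mul_distrib]
          refine Finset.prod_congr rfl fun i _ => ?_
          rw [← Real.rpow_add (by positivity)]; congr 1; ring
        rw [this]; ring

/-- The basic contour integral. -/
noncomputable def Hint (N : ℕ) (γ b : ℝ) (s : ℂ) : ℂ :=
  ∫ u : Fin N → ℝ, (wt γ 0 u : ℂ) * ∏ j, Efun b (s - Complex.I * u j)

lemma Hint_integrable {N : ℕ} {γ b : ℝ} (hγ : 0 < γ) (hb0 : 0 ≤ b)
    (hb : 2 * γ * ((N : ℝ) - 1) + 1 < b) {s : ℂ} (hs : 0 < s.re) :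
    Integrable fun u : Fin N → ℝ => (wt γ 0 u : ℂ) * ∏ j, Efun b (s - Complex.I * u j) := by
  obtain ⟨C, hC, hw⟩ := wt_bound (N := N) hγ
  obtain ⟨K, hK, hE⟩ := E_bound (max s.re |s.im|) b hs hb0
  refine ((Dom_integrable hb).const_mul (C * K ^ N)).mono' ?_ (Filter.Eventually.of_forall fun u => ?_)
  · refine Continuous.aestronglyMeasurable ?_
    refine (Complex.continuous_ofReal.comp (wt_continuous hγ 0)).mul
      (continuous_finsetProd _ fun j _ => (E_continuous b hs).comp (continuous_apply j))
  · refine prod_E_bound b C (fun _ x => Efun b (s - Complex.I * x)) K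
      (fun j x => hE s le_rfl (le_max_left _ _) (le_max_right _ _) x) _ u hC.le ?_
    rw [abs_of_nonneg (wt_nonneg γ le_rfl u)]
    exact hw 0 le_rfl zero_le_one u

lemma Hint_translate {N : ℕ} (γ b : ℝ) (s : ℂ) (y : ℝ) :
    Hint N γ b (s + Complex.I * y) = Hint N γ b s := by
  unfold Hint
  rw [← integral_add_right_eq_self (fun u : Fin N → ℝ =>
    (wt γ 0 u : ℂ) * ∏ j, Efun b (s + Complex.I * y - Complex.I * u j)) (fun _ => y)]
  congr 1; ext u
  rw [wt_add_const]
  congr 1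
  refine Finset.prod_congr rfl fun j _ => ?_
  congr 1; simp; ring

lemma Hint_hasDerivAt {N : ℕ} {γ b : ℝ} (hγ : 0 < γ) (hb0 : 0 ≤ b)
    (hb : 2 * γ * ((N : ℝ) - 1) + 1 < b) {s : ℂ} (hs : 0 < s.re) :
    DifferentiableAt ℂ (Hint N γ b) s := by
  obtain ⟨C, hC, hw⟩ := wt_bound (N := N) hγ
  set r := s.re / 2 with hr
  have hrp : 0 < r := by positivity
  set R := s.re + |s.im| + r with hR
  obtain ⟨K1, hK1, hE1⟩ := E_bound R b hrp hb0
  obtain ⟨K2, hK2, hE2⟩ := E_bound R (b + 1) hrp (by linarith)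
  set K := K1 + b * K2 with hK
  have hball : ∀ z ∈ Metric.ball s r, r ≤ z.re ∧ z.re ≤ R ∧ |z.im| ≤ R := by
    intro z hz
    rw [Metric.mem_ball, dist_eq_norm] at hz
    have h1 := (Complex.abs_re_le_norm (z - s)).trans hz.le
    have h2 := (Complex.abs_im_le_norm (z - s)).trans hz.le
    rw [Complex.sub_re] at h1
    rw [Complex.sub_im] at h2
    have h3 := abs_le.mp h1
    have h4 : |z.im| ≤ |z.im - s.im| + |s.im| := by
      have := abs_add_le (z.im - s.im) s.im
      simpa using this
    have := abs_nonneg s.im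
    refine ⟨by linarith [h3.1], by linarith [h3.2], by linarith⟩
  have hE' : ∀ z ∈ Metric.ball s r, ∀ x : ℝ,
      ‖Efun b (z - Complex.I * x) - b * Efun (b + 1) (z - Complex.I * x)‖ ≤
        K * (1 + x ^ 2) ^ (-b / 2) := by
    intro z hz x
    obtain ⟨h1, h2, h3⟩ := hball z hz
    have e1 := hE1 z h1 h2 h3 x
    have e2 := hE2 z h1 h2 h3 x
    have e3 : (1 + x ^ 2) ^ (-(b + 1) / 2) ≤ (1 + x ^ 2) ^ (-b / 2) :=
      Real.rpow_le_rpow_of_exponent_le (by nlinarith [sq_nonneg x]) (by linarith)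
    calc _ ≤ ‖Efun b (z - Complex.I * x)‖ + ‖(b : ℂ) * Efun (b + 1) (z - Complex.I * x)‖ :=
          norm_sub_le _ _
      _ ≤ K1 * (1 + x ^ 2) ^ (-b / 2) + b * (K2 * (1 + x ^ 2) ^ (-b / 2)) := by
          rw [norm_mul, Complex.norm_real, Real.norm_of_nonneg hb0]
          gcongr
          exact e2.trans (by gcongr)
      _ = _ := by rw [hK]; ring
  have hEK : ∀ z ∈ Metric.ball s r, ∀ x : ℝ,
      ‖Efun b (z - Complex.I * x)‖ ≤ K * (1 + x ^ 2) ^ (-b / 2) := by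
    intro z hz x
    obtain ⟨h1, h2, h3⟩ := hball z hz
    refine (hE1 z h1 h2 h3 x).trans ?_
    gcongr
    rw [hK]; have : 0 ≤ b * K2 := by positivity
    linarith
  have hslit : ∀ z ∈ Metric.ball s r, 0 < z.re := fun z hz => hrp.trans_le (hball z hz).1
  have main := hasDerivAt_integral_of_dominated_loc_of_deriv_le (𝕜 := ℂ)
    (μ := (volume : Measure (Fin N → ℝ))) (x₀ := s) (s := Metric.ball s r)
    (F := fun z u => (wt γ 0 u : ℂ) * ∏ j, Efun b (z - Complex.I * u j))
    (F' := fun z u => (wt γ 0 u : ℂ) * ∑ i, (∏ j ∈ Finset.univ.erase i, Efun b (z - Complex.I * u j)) •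
      (Efun b (z - Complex.I * u i) - b * Efun (b + 1) (z - Complex.I * u i)))
    (bound := fun u => N * (C * K ^ N * Dom γ b u))
    (Metric.ball_mem_nhds s hrp) ?_ (Hint_integrable hγ hb0 hb hs) ?_ ?_ ?_ ?_
  · exact main.2.differentiableAt
  · filter_upwards [Metric.ball_mem_nhds s hrp] with z hz
    exact (Hint_integrable hγ hb0 hb (hslit z hz)).aestronglyMeasurable
  · refine Continuous.aestronglyMeasurable ?_
    refine (Complex.continuous_ofReal.comp (wt_continuous hγ 0)).mul
      (continuous_finsetSum _ fun i _ => Continuous.smul (continuous_finsetProd _ fun j _ =>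
        (E_continuous b hs).comp (continuous_apply j)) (Continuous.sub ?_ ?_))
    · exact (E_continuous b hs).comp (continuous_apply i)
    · exact continuous_const.mul ((E_continuous (b + 1) hs).comp (continuous_apply i))
  · refine Filter.Eventually.of_forall fun u z hz => ?_
    rw [Finset.mul_sum]
    refine (norm_sum_le _ _).trans ?_
    have : ∀ i ∈ (Finset.univ : Finset (Fin N)),
        ‖(wt γ 0 u : ℂ) * ((∏ j ∈ Finset.univ.erase i, Efun b (z - Complex.I * u j)) •
      (Efun b (z - Complex.I * u i) - b * Efun (b + 1) (z - Complex.I * u i)))‖ ≤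
        C * K ^ N * Dom γ b u := by
      intro i _
      have hh := prod_E_bound b C (fun j x => if j = i then
        (Efun b (z - Complex.I * x) - b * Efun (b + 1) (z - Complex.I * x)) else
        Efun b (z - Complex.I * x)) K
        (fun j x => by split_ifs; exacts [hE' z hz x, hEK z hz x]) (wt γ 0 u) u hC.le (by
          rw [abs_of_nonneg (wt_nonneg γ le_rfl u)]
          exact hw 0 le_rfl zero_le_one u)
      rw [← Finset.mul_prod_erase _ _ (Finset.mem_univ i)] at hh
      convert hh using 3
      rw [if_pos rfl, smul_eq_mul, mul_comm]
      congr 1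
      refine Finset.prod_congr rfl fun j hj => ?_
      rw [if_neg (Finset.ne_of_mem_erase hj)]
    refine (Finset.sum_le_sum this).trans ?_
    simp
  · exact ((Dom_integrable hb).const_mul _).const_mul _
  · refine Filter.Eventually.of_forall fun u z hz => ?_
    refine HasDerivAt.const_mul _ ?_
    refine HasDerivAt.fun_finsetProd fun i _ => ?_
    have := E_hasDerivAt b (mem_slit (hslit z hz) (u i))
    exact this.comp_sub_const z (Complex.I * u i)

lemma Hint_const {N : ℕ} {γ b : ℝ} (hγ : 0 < γ) (hb0 : 0 ≤ b)
    (hb : 2 * γ * ((N : ℝ) - 1) + 1 < b) {c c' : ℝ} (hc : 0 < c) (hc' : 0 < c') :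
    Hint N γ b c = Hint N γ b c' := by
  have hd : ∀ x : ℝ, 0 < x → HasDerivAt (fun x : ℝ => Hint N γ b x) 0 x := by
    intro x hx
    have h := (Hint_hasDerivAt hγ hb0 hb (s := (x : ℂ)) (by simpa using hx)).hasDerivAt
    have h0 : deriv (Hint N γ b) (x : ℂ) = 0 := by
      have h2 : HasDerivAt (fun y : ℝ => (x : ℂ) + Complex.I * y) Complex.I 0 := by
        have : HasDerivAt (fun y : ℝ => (y : ℂ)) 1 0 := Complex.ofRealCLM.hasDerivAt
        simpa using (this.const_mul Complex.I).const_add (x : ℂ)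
      have h' : HasDerivAt (Hint N γ b) (deriv (Hint N γ b) (x : ℂ))
        ((x : ℂ) + Complex.I * ((0 : ℝ) : ℂ)) := by simpa using h
      have h3 := h'.comp (0 : ℝ) h2
      have h4 : (Hint N γ b ∘ fun y : ℝ => (x : ℂ) + Complex.I * y) = fun _ => Hint N γ b x := by
        ext y; exact Hint_translate γ b x y
      rw [h4] at h3
      have h5 := h3.unique (hasDerivAt_const _ _)
      simpa using h5
    rw [h0] at h
    exact h.comp_ofReal
  have hconv : Convex ℝ (Set.Ioi (0 : ℝ)) := convex_Ioi 0
  refine hconv.is_const_of_fderivWithin_eq_zero (𝕜 := ℝ) (f := fun x : ℝ => Hint N γ b x) ?_ ?_ hc hc'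
  · intro x hx; exact (hd x hx).differentiableAt.differentiableWithinAt
  · intro x hx
    rw [fderivWithin_of_isOpen isOpen_Ioi hx]
    ext
    simpa using (hd x hx).deriv

lemma integral_lineDeriv_zero {N : ℕ} (f f' : (Fin N → ℝ) → ℂ) (v : Fin N → ℝ)
    (hf : Integrable f) (hf' : Integrable f') (h : ∀ x, HasLineDerivAt ℝ f (f' x) x v) :
    ∫ x, f' x = 0 := by
  have := integral_bilinear_hasLineDerivAt_right_eq_neg_left_of_integrable
    (μ := (volume : Measure (Fin N → ℝ))) (f := fun _ => (1 : ℂ)) (f' := fun _ => 0)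
    (g := f) (g' := f') (v := v) (B := ContinuousLinearMap.mul ℝ ℂ)
    (by simp) (by simpa using hf') (by simpa using hf)
    (fun x _ => by simpa [HasLineDerivAt] using hasDerivAt_const (0 : ℝ) (1 : ℂ)) (fun x _ => h x)
  simpa using this

lemma wt_lineDeriv {N : ℕ} (γ : ℝ) {ε : ℝ} (hε : 0 < ε) (k : Fin N) (u : Fin N → ℝ) :
    HasDerivAt (fun t : ℝ => wt γ ε (u + t • Pi.single k 1))
      (wt γ ε u * (2 * γ * ∑ j, (u k - u j) / ((u k - u j) ^ 2 + ε))) 0 := by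
  have hexp : ∀ v : Fin N → ℝ, wt γ ε v = Real.exp (∑ i : Fin N, ∑ j ∈ ({i}ᶜ : Finset (Fin N)),
      Real.log ((v j - v i) ^ 2 + ε) * (γ / 2)) := by
    intro v
    unfold wt
    rw [Real.exp_sum]
    refine Finset.prod_congr rfl fun i _ => ?_
    rw [Real.exp_sum]
    refine Finset.prod_congr rfl fun j _ => ?_
    rw [Real.rpow_def_of_pos (by positivity)]
  set e : Fin N → ℝ := Pi.single k 1 with he
  have hd : HasDerivAt (fun t : ℝ => ∑ i : Fin N, ∑ j ∈ ({i}ᶜ : Finset (Fin N)),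
      Real.log (((u + t • e) j - (u + t • e) i) ^ 2 + ε) * (γ / 2))
      (∑ i : Fin N, ∑ j ∈ ({i}ᶜ : Finset (Fin N)),
        (γ * ((e j - e i) * ((u j - u i) / ((u j - u i) ^ 2 + ε))))) 0 := by
    refine HasDerivAt.fun_sum fun i _ => HasDerivAt.fun_sum fun j _ => ?_
    have h1 : HasDerivAt (fun t : ℝ => ((u + t • e) j - (u + t • e) i)) (e j - e i) 0 := by
      have : (fun t : ℝ => ((u + t • e) j - (u + t • e) i)) =
          fun t : ℝ => t * (e j - e i) + (u j - u i) := by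
        ext t; simp; ring
      rw [this]
      simpa using ((hasDerivAt_id (0 : ℝ)).mul_const (e j - e i)).add_const (u j - u i)
    have h2 := (((h1.pow 2).add_const ε).log (by simp; positivity)).mul_const (γ / 2)
    convert! h2 using 1
    simp
    field_simp
  have h3 := hd.exp
  have h4 : (fun t : ℝ => wt γ ε (u + t • e)) = fun t : ℝ =>
    Real.exp (∑ i : Fin N, ∑ j ∈ ({i}ᶜ : Finset (Fin N)),
      Real.log (((u + t • e) j - (u + t • e) i) ^ 2 + ε) * (γ / 2)) := by
    ext t; exact hexp _
  rw [h4]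
  convert! h3 using 1
  rw [zero_smul, add_zero, ← hexp u]
  congr 1
  have h5 : ∀ i, ∑ j ∈ ({i}ᶜ : Finset (Fin N)),
        (γ * ((e j - e i) * ((u j - u i) / ((u j - u i) ^ 2 + ε)))) =
      ∑ j, (γ * ((e j - e i) * ((u j - u i) / ((u j - u i) ^ 2 + ε)))) := by
    intro i
    refine Finset.sum_subset (Finset.subset_univ _) fun j _ hj => ?_
    have : j = i := by simpa using hj
    subst this; simp
  simp_rw [h5, ← Finset.mul_sum, sub_mul, Finset.sum_sub_distrib]
  have e1 : ∀ i, ∑ j, e j * ((u j - u i) / ((u j - u i) ^ 2 + ε)) =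
      (u k - u i) / ((u k - u i) ^ 2 + ε) := by
    intro i
    rw [Finset.sum_eq_single k] <;> simp +contextual [he]
  have e2 : ∑ i, ∑ j, e i * ((u j - u i) / ((u j - u i) ^ 2 + ε)) =
      ∑ j, (u j - u k) / ((u j - u k) ^ 2 + ε) := by
    rw [Finset.sum_eq_single k]
    · simp [he]
    · intro b _ hb; simp [he, hb]
    · simp
  have e3 : ∑ j, (u j - u k) / ((u j - u k) ^ 2 + ε) = - ∑ j, (u k - u j) / ((u k - u j) ^ 2 + ε) := by
    rw [← Finset.sum_neg_distrib]
    refine Finset.sum_congr rfl fun j _ => ?_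
    rw [← neg_div, neg_sub]; congr 2; ring
  simp_rw [e1]
  rw [e2, e3]; ring

/-- product of one-variable factors -/
noncomputable def PE {N : ℕ} (c : ℝ) (b : Fin N → ℝ) (u : Fin N → ℝ) : ℂ :=
  ∏ j, Efun (b j) ((c : ℂ) - Complex.I * u j)

lemma PE_continuous {N : ℕ} {c : ℝ} (hc : 0 < c) (b : Fin N → ℝ) : Continuous (PE c b) :=
  continuous_finsetProd _ fun j _ => (E_continuous (b j) (s := (c : ℂ)) (by simpa using hc)).comp
    (continuous_apply j)

lemma PE_update {N : ℕ} {c : ℝ} (hc : 0 < c) (b : Fin N → ℝ) (k : Fin N) {a : ℝ} (hk : b k = a)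
    (u : Fin N → ℝ) :
    PE c b u = ((c : ℂ) - Complex.I * u k) * PE c (Function.update b k (a + 1)) u := by
  unfold PE
  rw [← Finset.mul_prod_erase _ _ (Finset.mem_univ k),
    ← Finset.mul_prod_erase (f := fun j => Efun (Function.update b k (a + 1) j) ((c : ℂ) - Complex.I * u j))
      _ (Finset.mem_univ k), ← mul_assoc]
  congr 1
  · rw [Function.update_self, E_succ, hk]
    exact Complex.slitPlane_ne_zero (mem_slit (by simpa using hc) (u k))
  · refine Finset.prod_congr rfl fun j hj => ?_
    rw [Function.update_of_ne (Finset.ne_of_mem_erase hj)]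

lemma PE_perm {N : ℕ} (c : ℝ) (b : Fin N → ℝ) (σ : Equiv.Perm (Fin N)) (u : Fin N → ℝ) :
    PE c b (u ∘ σ) = PE c (b ∘ σ.symm) u := by
  unfold PE
  rw [← Equiv.prod_comp σ (fun j => Efun ((b ∘ σ.symm) j) ((c : ℂ) - Complex.I * u j))]
  refine Finset.prod_congr rfl fun j _ => ?_
  simp

lemma PE_lineDeriv {N : ℕ} {c : ℝ} (hc : 0 < c) (b : Fin N → ℝ) (k : Fin N) {a : ℝ} (hk : b k = a)
    (u : Fin N → ℝ) :
    HasDerivAt (fun t : ℝ => PE c b (u + t • Pi.single k 1))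
      (-Complex.I * (PE c b u - a * PE c (Function.update b k (a + 1)) u)) 0 := by
  have h1 : (fun t : ℝ => PE c b (u + t • Pi.single k 1)) = fun t : ℝ =>
      Efun a ((c : ℂ) - Complex.I * (u k + t)) *
        ∏ j ∈ Finset.univ.erase k, Efun (b j) ((c : ℂ) - Complex.I * u j) := by
    ext t
    unfold PE
    rw [← Finset.mul_prod_erase _ _ (Finset.mem_univ k)]
    congr 1
    · simp [hk]
    · refine Finset.prod_congr rfl fun j hj => ?_
      simp [Finset.ne_of_mem_erase hj]
  rw [h1]
  have hz : (c : ℂ) - Complex.I * (u k + (0 : ℝ)) ∈ Complex.slitPlane := by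
    have := mem_slit (s := (c : ℂ)) (by simpa using hc) (u k)
    simpa using this
  have h2 : HasDerivAt (fun t : ℝ => (c : ℂ) - Complex.I * (u k + t)) (-Complex.I) 0 := by
    have : HasDerivAt (fun y : ℝ => (y : ℂ)) 1 0 := Complex.ofRealCLM.hasDerivAt
    simpa using ((this.const_add (u k : ℂ)).const_mul Complex.I).const_sub (c : ℂ)
  have h3 := ((E_hasDerivAt a hz).comp (0 : ℝ) h2).mul_const
    (∏ j ∈ Finset.univ.erase k, Efun (b j) ((c : ℂ) - Complex.I * u j))
  convert! h3 using 1
  have e1 : PE c b u = Efun a ((c : ℂ) - Complex.I * u k) *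
        ∏ j ∈ Finset.univ.erase k, Efun (b j) ((c : ℂ) - Complex.I * u j) := by
    unfold PE
    rw [← Finset.mul_prod_erase _ _ (Finset.mem_univ k), hk]
  have e2 : PE c (Function.update b k (a + 1)) u = Efun (a + 1) ((c : ℂ) - Complex.I * u k) *
        ∏ j ∈ Finset.univ.erase k, Efun (b j) ((c : ℂ) - Complex.I * u j) := by
    unfold PE
    rw [← Finset.mul_prod_erase _ _ (Finset.mem_univ k), Function.update_self]
    congr 1
    refine Finset.prod_congr rfl fun j hj => ?_
    rw [Function.update_of_ne (Finset.ne_of_mem_erase hj)]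
  rw [e1, e2]; simp only [Complex.ofReal_zero, add_zero]; ring

lemma wtPE_bound {N : ℕ} {γ a c : ℝ} (hγ : 0 < γ) (ha : 0 ≤ a) (hc : 0 < c) :
    ∃ K : ℝ, 0 < K ∧ ∀ ε, 0 ≤ ε → ε ≤ 1 → ∀ b : Fin N → ℝ, (∀ j, b j = a ∨ b j = a + 1) →
      ∀ u, ‖(wt γ ε u : ℂ) * PE c b u‖ ≤ K * Dom γ a u := by
  obtain ⟨C, hC, hw⟩ := wt_bound (N := N) hγ
  obtain ⟨K1, hK1, hE1⟩ := E_bound (max c 0) a hc ha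
  obtain ⟨K2, hK2, hE2⟩ := E_bound (max c 0) (a + 1) hc (by linarith)
  refine ⟨C * (K1 + K2) ^ N, by positivity, ?_⟩
  intro ε h0 h1 b hb u
  refine prod_E_bound a C (fun j x => Efun (b j) ((c : ℂ) - Complex.I * x)) (K1 + K2) ?_ _ u hC.le ?_
  · intro j x
    have e1 := hE1 c (by simp) (by simp) (by simp) x
    have e2 := hE2 c (by simp) (by simp) (by simp) x
    have e3 : (1 + x ^ 2) ^ (-(a + 1) / 2) ≤ (1 + x ^ 2) ^ (-a / 2) :=
      Real.rpow_le_rpow_of_exponent_le (by nlinarith [sq_nonneg x]) (by linarith)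
    have e4 : 0 ≤ (1 + x ^ 2) ^ (-a / 2) := by positivity
    rcases hb j with h | h
    · simp only [h]; nlinarith
    · simp only [h]; nlinarith
  · rw [abs_of_nonneg (wt_nonneg γ h0 u)]
    exact hw ε h0 h1 u

lemma integral_perm {N : ℕ} (g : (Fin N → ℝ) → ℂ) (σ : Equiv.Perm (Fin N)) :
    ∫ u, g (u ∘ σ) = ∫ u, g u := by
  have h := volume_measurePreserving_piCongrLeft (fun _ : Fin N => ℝ) σ
  rw [← h.integral_comp (MeasurableEquiv.measurableEmbedding _)]
  congr 1; ext u; congr 1; ext i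
  rw [MeasurableEquiv.coe_piCongrLeft]
  exact Equiv.piCongrLeft_apply_apply (fun _ : Fin N => ℝ) σ u i

/-- kernel -/
noncomputable def qk {N : ℕ} (ε : ℝ) (k j : Fin N) (u : Fin N → ℝ) : ℝ :=
  (u k - u j) / ((u k - u j) ^ 2 + ε)

lemma qk_bound {N : ℕ} {ε : ℝ} (hε : 0 < ε) (k j : Fin N) (u : Fin N → ℝ) :
    |qk ε k j u| ≤ 1 / ε + 1 := by
  unfold qk
  set d := u k - u j
  rw [abs_div, abs_of_pos (show 0 < d ^ 2 + ε by positivity), div_le_iff₀ (by positivity)]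
  have : (1 / ε + 1) * (d ^ 2 + ε) = d ^ 2 / ε + 1 + d ^ 2 + ε := by field_simp; ring
  rw [this]
  have : 0 ≤ d ^ 2 / ε := by positivity
  nlinarith [sq_nonneg (|d| - 1), sq_abs d, abs_nonneg d]

lemma qk_continuous {N : ℕ} {ε : ℝ} (hε : 0 < ε) (k j : Fin N) :
    Continuous (qk ε k j) := by
  unfold qk
  refine Continuous.div (by fun_prop) (by fun_prop) fun u => by positivity

lemma qk_mul_bound {N : ℕ} {ε : ℝ} (hε : 0 < ε) (k j : Fin N) (u : Fin N → ℝ) :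
    |qk ε k j u * (u k - u j)| ≤ 1 := by
  unfold qk
  set d := u k - u j
  rw [div_mul_eq_mul_div, abs_of_nonneg (by rw [← sq]; positivity), div_le_one (by positivity)]
  nlinarith

section recursion
variable {N : ℕ} {γ a c : ℝ}

lemma wtPE_integrable (hγ : 0 < γ) (ha0 : 0 ≤ a) (hc : 0 < c)
    (ha : 2 * γ * ((N : ℝ) - 1) + 1 < a) {ε : ℝ} (h0 : 0 ≤ ε) (h1 : ε ≤ 1)
    (b : Fin N → ℝ) (hb : ∀ j, b j = a ∨ b j = a + 1) :
    Integrable fun u => (wt γ ε u : ℂ) * PE c b u := by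
  obtain ⟨K, hK, hbd⟩ := wtPE_bound (N := N) hγ ha0 hc
  refine ((Dom_integrable ha).const_mul K).mono' ?_ (Filter.Eventually.of_forall fun u => hbd ε h0 h1 b hb u)
  exact ((Complex.continuous_ofReal.comp (wt_continuous hγ ε)).mul
    (PE_continuous hc b)).aestronglyMeasurable

lemma qk_integrable (hγ : 0 < γ) (ha0 : 0 ≤ a) (hc : 0 < c)
    (ha : 2 * γ * ((N : ℝ) - 1) + 1 < a) {ε : ℝ} (h0 : 0 < ε) (h1 : ε ≤ 1)
    (b : Fin N → ℝ) (hb : ∀ j, b j = a ∨ b j = a + 1) (k j : Fin N) :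
    Integrable fun u => (qk ε k j u : ℂ) * ((wt γ ε u : ℂ) * PE c b u) := by
  refine (wtPE_integrable hγ ha0 hc ha h0.le h1 b hb).bdd_mul (c := 1 / ε + 1) ?_ ?_
  · exact (Complex.continuous_ofReal.comp (qk_continuous h0 k j)).aestronglyMeasurable
  · refine Filter.Eventually.of_forall fun u => ?_
    rw [Complex.norm_real, Real.norm_eq_abs]
    exact qk_bound h0 k j u

lemma eps_identity (hγ : 0 < γ) (ha0 : 0 ≤ a) (hc : 0 < c)
    (ha : 2 * γ * ((N : ℝ) - 1) + 1 < a) {ε : ℝ} (h0 : 0 < ε) (h1 : ε ≤ 1)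
    (b : Fin N → ℝ) (hb : ∀ j, b j = a ∨ b j = a + 1) (k : Fin N) (hk : b k = a) :
    2 * γ * (∑ j, ∫ u, (qk ε k j u : ℂ) * ((wt γ ε u : ℂ) * PE c b u)) +
      (-Complex.I) * ((∫ u, (wt γ ε u : ℂ) * PE c b u) -
        a * ∫ u, (wt γ ε u : ℂ) * PE c (Function.update b k (a + 1)) u) = 0 := by
  have hb' : ∀ j, Function.update b k (a + 1) j = a ∨ Function.update b k (a + 1) j = a + 1 := by
    intro j
    by_cases h : j = k
    · subst h; right; simp
    · rw [Function.update_of_ne h]; exact hb j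
  have i1 := wtPE_integrable hγ ha0 hc ha h0.le h1 b hb
  have i2 := wtPE_integrable hγ ha0 hc ha h0.le h1 _ hb'
  have i3 := fun j => qk_integrable hγ ha0 hc ha h0 h1 b hb k j
  have i4 : Integrable fun u => 2 * (γ : ℂ) * ∑ j, (qk ε k j u : ℂ) * ((wt γ ε u : ℂ) * PE c b u) :=
    (integrable_finsetSum _ fun j _ => i3 j).const_mul _
  have i5 : Integrable fun u => (-Complex.I) * (((wt γ ε u : ℂ) * PE c b u) -
        a * ((wt γ ε u : ℂ) * PE c (Function.update b k (a + 1)) u)) :=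
    (i1.sub (i2.const_mul _)).const_mul _
  have key := integral_lineDeriv_zero (fun u => (wt γ ε u : ℂ) * PE c b u)
    (fun u => 2 * (γ : ℂ) * ∑ j, (qk ε k j u : ℂ) * ((wt γ ε u : ℂ) * PE c b u) +
      (-Complex.I) * (((wt γ ε u : ℂ) * PE c b u) -
        a * ((wt γ ε u : ℂ) * PE c (Function.update b k (a + 1)) u))) (Pi.single k 1) i1
    (i4.add i5) (by
      intro u
      unfold HasLineDerivAt
      have h := (wt_lineDeriv γ h0 k u).ofReal_comp.mul (PE_lineDeriv hc b k hk u)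
      convert! h using 1
      simp only [zero_smul, add_zero]
      rw [← Finset.sum_mul]
      unfold qk
      push_cast
      ring)
  rw [integral_add i4 i5, integral_const_mul, integral_const_mul, integral_finsetSum _ (fun j _ => i3 j),
    integral_sub i1 (i2.const_mul _), integral_const_mul] at key
  exact key

lemma qk_swap {ε : ℝ} (k j : Fin N) (u : Fin N → ℝ) :
    qk ε k j (u ∘ Equiv.swap k j) = - qk ε k j u := by
  unfold qk
  simp only [Function.comp_apply, Equiv.swap_apply_left, Equiv.swap_apply_right]
  rw [← neg_div, neg_sub]; congr 2; ring

lemma T_swap {ε : ℝ} (b : Fin N → ℝ) (k j : Fin N) :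
    ∫ u, (qk ε k j u : ℂ) * ((wt γ ε u : ℂ) * PE c b u) =
      - ∫ u, (qk ε k j u : ℂ) * ((wt γ ε u : ℂ) * PE c (b ∘ Equiv.swap k j) u) := by
  rw [← integral_perm _ (Equiv.swap k j), ← integral_neg]
  congr 1; ext u
  rw [qk_swap, wt_perm, PE_perm]
  simp

lemma T_zero {ε : ℝ} (b : Fin N → ℝ) (k j : Fin N) (h : b k = b j) :
    ∫ u, (qk ε k j u : ℂ) * ((wt γ ε u : ℂ) * PE c b u) = 0 := by
  have h1 := T_swap (γ := γ) (c := c) (ε := ε) b k j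
  have h2 : b ∘ Equiv.swap k j = b := by
    ext i
    simp only [Function.comp_apply]
    by_cases hk : i = k
    · subst hk; rw [Equiv.swap_apply_left, h]
    by_cases hj : i = j
    · subst hj; rw [Equiv.swap_apply_right, h]
    rw [Equiv.swap_apply_of_ne_of_ne hk hj]
  rw [h2] at h1
  exact self_eq_neg.mp h1

lemma T_sym (hγ : 0 < γ) (ha0 : 0 ≤ a) (hc : 0 < c)
    (ha : 2 * γ * ((N : ℝ) - 1) + 1 < a) {ε : ℝ} (h0 : 0 < ε) (h1 : ε ≤ 1)
    (b : Fin N → ℝ) (hb : ∀ j, b j = a ∨ b j = a + 1) (k j : Fin N) (hk : b k = a) (hj : b j = a + 1) :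
    2 * ∫ u, (qk ε k j u : ℂ) * ((wt γ ε u : ℂ) * PE c b u) =
      -Complex.I * ∫ u, ((qk ε k j u * (u k - u j) : ℝ) : ℂ) *
        ((wt γ ε u : ℂ) * PE c (Function.update b k (a + 1)) u) := by
  have hkj : k ≠ j := by rintro rfl; linarith
  have hb2 : ∀ i, (b ∘ Equiv.swap k j) i = a ∨ (b ∘ Equiv.swap k j) i = a + 1 := fun i => hb _
  have i1 := qk_integrable hγ ha0 hc ha h0 h1 b hb k j
  have i2 := qk_integrable hγ ha0 hc ha h0 h1 _ hb2 k j
  rw [two_mul]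
  conv_lhs => rw [T_swap (γ := γ) (c := c) (ε := ε) b k j]
  rw [← integral_const_mul]
  have e := T_swap (γ := γ) (c := c) (ε := ε) b k j
  have : (- ∫ u, (qk ε k j u : ℂ) * ((wt γ ε u : ℂ) * PE c (b ∘ Equiv.swap k j) u)) +
      (- ∫ u, (qk ε k j u : ℂ) * ((wt γ ε u : ℂ) * PE c (b ∘ Equiv.swap k j) u)) =
      (∫ u, (qk ε k j u : ℂ) * ((wt γ ε u : ℂ) * PE c b u)) -
      ∫ u, (qk ε k j u : ℂ) * ((wt γ ε u : ℂ) * PE c (b ∘ Equiv.swap k j) u) := by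
    rw [e]; ring
  rw [this, ← integral_sub i1 i2]
  congr 1; ext u
  have hu : Function.update (b ∘ Equiv.swap k j) j (a + 1) = Function.update b k (a + 1) := by
    ext i
    by_cases hik : i = k
    · subst hik; rw [Function.update_of_ne hkj, Function.update_self]; simp [hj]
    by_cases hij : i = j
    · subst hij; rw [Function.update_of_ne (Ne.symm hkj), Function.update_self, hj]
    rw [Function.update_of_ne hik, Function.update_of_ne hij, Function.comp_apply,
      Equiv.swap_apply_of_ne_of_ne hik hij]
  rw [PE_update hc b k hk u, PE_update hc (b ∘ Equiv.swap k j) j (a := a) (by simp [hk]) u, hu]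
  push_cast; ring

/-- limit as `ε → 0` of basic integrals -/
lemma lim_basic (hγ : 0 < γ) (ha0 : 0 ≤ a) (hc : 0 < c)
    (ha : 2 * γ * ((N : ℝ) - 1) + 1 < a)
    (b : Fin N → ℝ) (hb : ∀ j, b j = a ∨ b j = a + 1) (p : ℝ → (Fin N → ℝ) → ℝ)
    (hpc : ∀ ε, 0 < ε → Continuous (p ε)) (hp1 : ∀ ε, 0 < ε → ∀ u, |p ε u| ≤ 1)
    (hlim : ∀ u, Filter.Tendsto (fun ε => p ε u * wt γ ε u) (nhdsWithin 0 (Set.Ioi 0)) (nhds (wt γ 0 u))) :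
    Filter.Tendsto (fun ε => ∫ u, (p ε u : ℂ) * ((wt γ ε u : ℂ) * PE c b u))
      (nhdsWithin 0 (Set.Ioi 0)) (nhds (∫ u, (wt γ 0 u : ℂ) * PE c b u)) := by
  obtain ⟨K, hK, hbd⟩ := wtPE_bound (N := N) hγ ha0 hc
  have hev : ∀ᶠ ε in nhdsWithin (0 : ℝ) (Set.Ioi 0), 0 < ε ∧ ε ≤ 1 := by
    filter_upwards [Ioc_mem_nhdsGT (zero_lt_one (α := ℝ))] with ε h using ⟨h.1, h.2⟩
  refine tendsto_integral_filter_of_dominated_convergence (fun u => K * Dom γ a u) ?_ ?_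
    ((Dom_integrable ha).const_mul K) ?_
  · filter_upwards [hev] with ε h
    exact ((Complex.continuous_ofReal.comp (hpc ε h.1)).mul
      ((Complex.continuous_ofReal.comp (wt_continuous hγ ε)).mul
        (PE_continuous hc b))).aestronglyMeasurable
  · filter_upwards [hev] with ε h
    refine Filter.Eventually.of_forall fun u => ?_
    rw [norm_mul, Complex.norm_real, Real.norm_eq_abs]
    calc _ ≤ 1 * ‖(wt γ ε u : ℂ) * PE c b u‖ := by gcongr; exact hp1 ε h.1 u
      _ ≤ _ := by rw [one_mul]; exact hbd ε h.1.le h.2 b hb u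
  · refine Filter.Eventually.of_forall fun u => ?_
    have := ((Complex.continuous_ofReal.tendsto _).comp (hlim u)).mul_const (PE c b u)
    refine this.congr fun ε => ?_
    simp [mul_assoc]

lemma qk_lim (hγ : 0 < γ) {k j : Fin N} (hkj : k ≠ j) (u : Fin N → ℝ) :
    Filter.Tendsto (fun ε => (qk ε k j u * (u k - u j)) * wt γ ε u)
      (nhdsWithin 0 (Set.Ioi 0)) (nhds (wt γ 0 u)) := by
  by_cases hd : u k - u j = 0
  · have : wt γ 0 u = 0 := by
      unfold wt
      refine Finset.prod_eq_zero (Finset.mem_univ j) (Finset.prod_eq_zero (i := k) (by simpa using hkj) ?_)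
      rw [hd]; simp; rw [Real.zero_rpow (by positivity)]
    rw [this]; simp [hd]
  · have h1 : Filter.Tendsto (fun ε => qk ε k j u * (u k - u j)) (nhdsWithin 0 (Set.Ioi 0)) (nhds 1) := by
      apply tendsto_nhdsWithin_of_tendsto_nhds
      have : ContinuousAt (fun ε => qk ε k j u * (u k - u j)) 0 := by
        unfold qk
        refine ContinuousAt.mul (ContinuousAt.div (by fun_prop) (by fun_prop) ?_) (by fun_prop)
        simpa using hd
      have h2 := this.tendsto
      convert h2 using 2
      unfold qk; field_simp; simp
    simpa using h1.mul (wt_tendsto hγ u)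

lemma rec_step (hγ : 0 < γ) (ha0 : 0 ≤ a) (hc : 0 < c)
    (ha : 2 * γ * ((N : ℝ) - 1) + 1 < a) (S : Finset (Fin N)) (k : Fin N) (hkS : k ∉ S) :
    ∫ u, (wt γ 0 u : ℂ) * PE c (fun i => if i ∈ insert k S then a else a + 1) u =
      ((a - γ * ((N : ℝ) - 1 - S.card) : ℝ) : ℂ) *
        ∫ u, (wt γ 0 u : ℂ) * PE c (fun i => if i ∈ S then a else a + 1) u := by
  set b : Fin N → ℝ := fun i => if i ∈ insert k S then a else a + 1 with hbdef
  set b' : Fin N → ℝ := fun i => if i ∈ S then a else a + 1 with hbdef'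
  have hb : ∀ j, b j = a ∨ b j = a + 1 := fun j => by simp only [hbdef]; split_ifs <;> simp
  have hb' : ∀ j, b' j = a ∨ b' j = a + 1 := fun j => by simp only [hbdef']; split_ifs <;> simp
  have hk : b k = a := by simp [hbdef]
  have hup : Function.update b k (a + 1) = b' := by
    ext i
    by_cases h : i = k
    · subst h; simp [hbdef', hkS]
    · simp [hbdef, hbdef', h]
  have hT : ∀ j, Filter.Tendsto
      (fun ε => 2 * ∫ u, (qk ε k j u : ℂ) * ((wt γ ε u : ℂ) * PE c b u))
      (nhdsWithin 0 (Set.Ioi 0)) (nhds (if j ∈ insert k S then 0 else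
        -Complex.I * ∫ u, (wt γ 0 u : ℂ) * PE c b' u)) := by
    intro j
    split_ifs with hj
    · have : b k = b j := by rw [hk]; simp only [hbdef, if_pos hj]
      simp_rw [T_zero b k j this]; simp
    · have hbj : b j = a + 1 := by simp only [hbdef, if_neg hj]
      have hkj : k ≠ j := by rintro rfl; simp at hj
      have := (lim_basic hγ ha0 hc ha b' hb' (fun ε u => qk ε k j u * (u k - u j))
        (fun ε h => (qk_continuous h k j).mul (by fun_prop)) (fun ε h u => qk_mul_bound h k j u)
        (fun u => qk_lim hγ hkj u)).const_mul (-Complex.I)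
      refine this.congr' ?_
      filter_upwards [Ioc_mem_nhdsGT (zero_lt_one (α := ℝ))] with ε h
      rw [T_sym hγ ha0 hc ha h.1 h.2 b hb k j hk hbj, hup]
  have hJ : ∀ b : Fin N → ℝ, (∀ j, b j = a ∨ b j = a + 1) → Filter.Tendsto
      (fun ε => ∫ u, (wt γ ε u : ℂ) * PE c b u) (nhdsWithin 0 (Set.Ioi 0))
      (nhds (∫ u, (wt γ 0 u : ℂ) * PE c b u)) := by
    intro b hb
    have := lim_basic hγ ha0 hc ha b hb (fun _ _ => 1) (fun _ _ => continuous_const)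
      (fun _ _ _ => by simp) (fun u => by simpa using wt_tendsto hγ u)
    simpa using this
  have hsum := ((tendsto_finsetSum Finset.univ fun j _ => hT j).const_mul (γ : ℂ)).add
    (((hJ b hb).sub ((hJ b' hb').const_mul (a : ℂ))).const_mul (-Complex.I))
  have hz : Filter.Tendsto (fun _ : ℝ => (0 : ℂ)) (nhdsWithin (0 : ℝ) (Set.Ioi 0)) (nhds 0) :=
    tendsto_const_nhds
  have heq := tendsto_nhds_unique_of_eventuallyEq hsum hz (by
    filter_upwards [Ioc_mem_nhdsGT (zero_lt_one (α := ℝ))] with ε h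
    rw [← eps_identity hγ ha0 hc ha h.1 h.2 b hb k hk, hup, ← Finset.mul_sum]
    ring)
  have hcount : ∑ j : Fin N, (if j ∈ insert k S then (0 : ℂ) else
        -Complex.I * ∫ u, (wt γ 0 u : ℂ) * PE c b' u) =
      ((N : ℂ) - 1 - S.card) * (-Complex.I * ∫ u, (wt γ 0 u : ℂ) * PE c b' u) := by
    rw [Finset.sum_ite, Finset.sum_const_zero, zero_add, Finset.sum_const, nsmul_eq_mul]
    congr 1
    have h1 : (Finset.univ.filter fun j => j ∉ insert k S) = (insert k S)ᶜ := by
      ext; simp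
    rw [h1, Finset.card_compl, Fintype.card_fin, Nat.cast_sub, Finset.card_insert_of_notMem hkS]
    · push_cast; ring
    · simpa using Finset.card_le_univ (insert k S)
  rw [hcount] at heq
  have hI : Complex.I ≠ 0 := Complex.I_ne_zero
  apply mul_left_cancel₀ hI
  push_cast
  linear_combination -heq

lemma Hint_rec (hγ : 0 < γ) (ha0 : 0 ≤ a) (hc : 0 < c)
    (ha : 2 * γ * ((N : ℝ) - 1) + 1 < a) :
    Hint N γ a c = ((∏ j ∈ Finset.range N, (a - γ * j) : ℝ) : ℂ) * Hint N γ (a + 1) c := by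
  have h : ∀ S : Finset (Fin N),
      ∫ u, (wt γ 0 u : ℂ) * PE c (fun i => if i ∈ S then a else a + 1) u =
      ((∏ l ∈ Finset.range S.card, (a - γ * ((N : ℝ) - 1 - l)) : ℝ) : ℂ) * Hint N γ (a + 1) c := by
    intro S
    induction S using Finset.induction_on with
    | empty => simp [Hint, PE]
    | insert k S hk ih =>
      rw [rec_step hγ ha0 hc ha S k hk, ih, Finset.card_insert_of_notMem hk, Finset.prod_range_succ]
      push_cast; ring
  have h2 := h Finset.univ
  simp only [Finset.mem_univ, if_true, Finset.card_univ, Fintype.card_fin] at h2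
  have h3 : Hint N γ a c = ∫ u, (wt γ 0 u : ℂ) * PE c (fun i : Fin N => a) u := rfl
  rw [h3, h2]
  congr 2
  rw [← Finset.prod_range_reflect]
  refine Finset.prod_congr rfl fun j hj => ?_
  have : j + 1 ≤ N := Finset.mem_range.mp hj
  rw [show N - 1 - j = N - (j + 1) by omega, Nat.cast_sub this]
  push_cast; ring
end recursion

/-- Normalised one-variable factor. -/
noncomputable def Gf (b c x : ℝ) : ℂ :=
  Complex.exp (-(Complex.I * c * x)) * (1 - Complex.I * (c / b : ℝ) * x) ^ ((-b : ℝ) : ℂ)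

lemma Efun_eq_Gf {b : ℝ} (hb : 0 < b) (c x : ℝ) :
    Efun b ((b : ℂ) - Complex.I * ((c * x : ℝ) : ℂ)) = ((b ^ (-b) * Real.exp b : ℝ) : ℂ) * Gf b c x := by
  unfold Efun Gf
  have h1 : (b : ℂ) - Complex.I * ((c * x : ℝ) : ℂ) = (b : ℂ) * (1 - Complex.I * (c / b : ℝ) * x) := by
    have : (b : ℂ) ≠ 0 := by exact_mod_cast hb.ne'
    push_cast; field_simp
  have h2 : Complex.exp ((b : ℂ) - Complex.I * ((c * x : ℝ) : ℂ)) =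
      Complex.exp b * Complex.exp (-(Complex.I * c * x)) := by
    rw [← Complex.exp_add]; congr 1; push_cast; ring
  rw [h2, h1]
  have h3 : ((b : ℂ) * (1 - Complex.I * (c / b : ℝ) * x)) ^ ((-b : ℝ) : ℂ) =
      (b : ℂ) ^ ((-b : ℝ) : ℂ) * (1 - Complex.I * (c / b : ℝ) * x) ^ ((-b : ℝ) : ℂ) := by
    have hne : (1 - Complex.I * (c / b : ℝ) * x) ≠ 0 := by
      intro h
      have := congrArg Complex.re h
      simp at this
    have hb' : (b : ℂ) ≠ 0 := by exact_mod_cast hb.ne'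
    rw [Complex.cpow_def_of_ne_zero (mul_ne_zero hb' hne), Complex.cpow_def_of_ne_zero hb',
      Complex.cpow_def_of_ne_zero hne, Complex.log_ofReal_mul hb hne, ← Complex.exp_add,
      Complex.ofReal_log hb.le]
    congr 1; ring
  rw [h3, Complex.ofReal_mul, Complex.ofReal_cpow hb.le, Complex.ofReal_exp]
  ring

lemma Hint_scale {N : ℕ} (γ : ℝ) {b c : ℝ} (hb : 0 < b) (hc : 0 < c) :
    Hint N γ b b = ((c ^ ((N : ℝ) + γ * N * ((N : ℝ) - 1)) * (b ^ (-b) * Real.exp b) ^ N : ℝ) : ℂ) *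
      ∫ y : Fin N → ℝ, (wt γ 0 y : ℂ) * ∏ j, Gf b c (y j) := by
  have h := Measure.integral_comp_smul (volume : Measure (Fin N → ℝ))
    (fun u : Fin N → ℝ => (wt γ 0 u : ℂ) * ∏ j, Efun b (b - Complex.I * u j)) c
  have h2 : ∀ u : Fin N → ℝ, (wt γ 0 (c • u) : ℂ) * ∏ j, Efun b (b - Complex.I * ((c • u) j : ℝ)) =
      ((c ^ (γ * N * ((N : ℝ) - 1)) * (b ^ (-b) * Real.exp b) ^ N : ℝ) : ℂ) *
        ((wt γ 0 u : ℂ) * ∏ j, Gf b c (u j)) := by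
    intro u
    rw [wt_smul γ hc]
    have : ∀ j, Efun b (b - Complex.I * ((c • u) j : ℝ)) =
      ((b ^ (-b) * Real.exp b : ℝ) : ℂ) * Gf b c (u j) := fun j => by
        rw [← Efun_eq_Gf hb]; simp
    simp_rw [this]
    rw [Finset.prod_mul_distrib, Finset.prod_const, Finset.card_univ, Fintype.card_fin]
    push_cast; ring
  simp_rw [h2] at h
  rw [integral_const_mul] at h
  have h3 : |(c ^ Module.finrank ℝ (Fin N → ℝ))⁻¹| = (c ^ N)⁻¹ := by
    rw [Module.finrank_fin_fun, abs_of_pos (by positivity)]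
  rw [h3] at h
  have h4 : c ^ ((N : ℝ) + γ * N * ((N : ℝ) - 1)) = c ^ N * c ^ (γ * N * ((N : ℝ) - 1)) := by
    rw [Real.rpow_add hc, Real.rpow_natCast]
  rw [h4, show c ^ N * c ^ (γ * N * ((N : ℝ) - 1)) * (b ^ (-b) * Real.exp b) ^ N =
    c ^ N * (c ^ (γ * N * ((N : ℝ) - 1)) * (b ^ (-b) * Real.exp b) ^ N) by ring, Complex.ofReal_mul,
    mul_assoc, h]
  have hcN : ((c ^ N : ℝ) : ℂ) ≠ 0 := by exact_mod_cast (by positivity : c ^ N ≠ 0)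
  rw [Complex.real_smul, Complex.ofReal_inv, mul_inv_cancel_left₀ hcN]
  rfl

lemma Gf_continuous (b c : ℝ) : Continuous (Gf b c) := by
  unfold Gf
  refine Continuous.mul (by fun_prop) ?_
  refine Continuous.cpow (by fun_prop) continuous_const fun x => ?_
  left; simp

lemma Gf_norm {b : ℝ} (hb : 0 < b) (x : ℝ) :
    ‖Gf b (Real.sqrt b) x‖ = (1 + x ^ 2 / b) ^ (-b / 2) := by
  unfold Gf
  rw [norm_mul, Complex.norm_cpow_real, Complex.norm_exp]
  have h0 : (-(Complex.I * (Real.sqrt b : ℝ) * x)).re = 0 := by simp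
  have hsq : ‖(1 - Complex.I * ((Real.sqrt b / b : ℝ) : ℂ) * x)‖ ^ 2 = 1 + x ^ 2 / b := by
    rw [← Complex.normSq_eq_norm_sq, Complex.normSq_apply]
    have h1 : (1 - Complex.I * ((Real.sqrt b / b : ℝ) : ℂ) * x).re = 1 := by simp
    have h2 : (1 - Complex.I * ((Real.sqrt b / b : ℝ) : ℂ) * x).im = -(Real.sqrt b / b * x) := by
      simp [-Complex.ofReal_div]
    rw [h1, h2]
    have := Real.sq_sqrt hb.le
    field_simp
    rw [this]; ring
  rw [h0, Real.exp_zero, one_mul, ← hsq, ← Real.rpow_natCast, ← Real.rpow_mul (norm_nonneg _)]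
  congr 1; push_cast; ring

lemma Gf_bound {a : ℝ} (ha : 0 < a) :
    ∃ K : ℝ, 0 < K ∧ ∀ b, a ≤ b → ∀ x : ℝ,
      ‖Gf b (Real.sqrt b) x‖ ≤ K * (1 + x ^ 2) ^ (-a / 2) := by
  have hm : 0 < min 1 (1 / a) := by positivity
  refine ⟨(min 1 (1 / a)) ^ (-a / 2), by positivity, fun b hab x => ?_⟩
  have hb : 0 < b := ha.trans_le hab
  rw [Gf_norm hb, ← Real.mul_rpow hm.le (by positivity)]
  have h1 : min 1 (1 / a) * (1 + x ^ 2) ≤ 1 + x ^ 2 / a := by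
    have e1 := min_le_left 1 (1 / a)
    have e2 := min_le_right 1 (1 / a)
    have : x ^ 2 / a = 1 / a * x ^ 2 := by ring
    rw [this]
    nlinarith [sq_nonneg x]
  have h2 : 1 + x ^ 2 / a ≤ (1 + x ^ 2 / b) ^ (b / a) := by
    have := one_add_mul_self_le_rpow_one_add (s := x ^ 2 / b) (by have : 0 ≤ x ^ 2 / b := by positivity
                                                                  linarith)
      (p := b / a) (by rw [le_div_iff₀ ha]; linarith)
    refine le_trans (le_of_eq ?_) this
    field_simp
  have h3 : (1 + x ^ 2 / b) ^ (-b / 2) = ((1 + x ^ 2 / b) ^ (b / a)) ^ (-a / 2) := by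
    rw [← Real.rpow_mul (by positivity)]; congr 1; field_simp
  rw [h3]
  exact Real.rpow_le_rpow_of_nonpos (by positivity) (h1.trans h2) (by linarith)

lemma Gf_tendsto (x : ℝ) :
    Filter.Tendsto (fun b : ℝ => Gf b (Real.sqrt b) x) Filter.atTop
      (nhds ((Real.exp (-(x ^ 2) / 2) : ℝ) : ℂ)) := by
  set z : ℝ → ℂ := fun b => -(Complex.I * (Real.sqrt b / b : ℝ) * x) with hz
  set r : ℝ → ℂ := fun b => Complex.log (1 + z b) - Complex.logTaylor 3 (z b) with hr
  have hT : ∀ w : ℂ, Complex.logTaylor 3 w = w - w ^ 2 / 2 := by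
    intro w
    simp [Complex.logTaylor, Finset.sum_range_succ]; ring
  have hsb : ∀ b : ℝ, 0 < b → Real.sqrt b / b = (Real.sqrt b)⁻¹ := by
    intro b hb; rw [Real.sqrt_div_self', one_div]
  have hs : Filter.Tendsto (fun b : ℝ => (Real.sqrt b)⁻¹) Filter.atTop (nhds 0) :=
    tendsto_inv_atTop_zero.comp Real.tendsto_sqrt_atTop
  have hzn : ∀ b, 0 < b → ‖z b‖ = (Real.sqrt b)⁻¹ * |x| := by
    intro b hb
    rw [hz]; simp only [hsb b hb, norm_neg, norm_mul, Complex.norm_I, one_mul, Complex.norm_real,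
      Real.norm_eq_abs]
    rw [abs_of_nonneg (by positivity)]
  have hz0 : Filter.Tendsto z Filter.atTop (nhds 0) := by
    rw [tendsto_zero_iff_norm_tendsto_zero]
    have := hs.mul_const |x|
    rw [zero_mul] at this
    refine this.congr' ?_
    filter_upwards [Filter.eventually_gt_atTop 0] with b hb using (hzn b hb).symm
  have hrO := (Complex.log_sub_logTaylor_isBigO 2).comp_tendsto hz0
  obtain ⟨C, hC⟩ := hrO.bound
  have hbr : Filter.Tendsto (fun b : ℝ => (b : ℂ) * r b) Filter.atTop (nhds 0) := by
    rw [tendsto_zero_iff_norm_tendsto_zero]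
    have h1 := hs.const_mul (C * |x| ^ 3)
    rw [mul_zero] at h1
    refine squeeze_zero' (Filter.Eventually.of_forall fun _ => norm_nonneg _) ?_ h1
    filter_upwards [hC, Filter.eventually_gt_atTop 0] with b h hb
    simp only [Function.comp_apply, norm_pow] at h
    rw [hzn b hb] at h
    have hs2 := Real.sq_sqrt hb.le
    have hsp := Real.sqrt_pos.mpr hb
    rw [norm_mul, Complex.norm_real, Real.norm_eq_abs, abs_of_pos hb]
    calc b * ‖r b‖ ≤ b * (C * ((Real.sqrt b)⁻¹ * |x|) ^ (2 + 1)) := by gcongr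
      _ = C * |x| ^ 3 * (Real.sqrt b)⁻¹ := by
        nth_rewrite 1 [← hs2]; rw [show (2 + 1 : ℕ) = 3 from rfl]; field_simp
  have hfin : Filter.Tendsto (fun b : ℝ => Complex.exp (-(b * r b) + ((-(x ^ 2) / 2 : ℝ) : ℂ)))
      Filter.atTop (nhds ((Real.exp (-(x ^ 2) / 2) : ℝ) : ℂ)) := by
    have := (hbr.neg.add_const (((-(x ^ 2) / 2 : ℝ) : ℂ))).cexp
    rw [neg_zero, zero_add] at this
    rwa [Complex.ofReal_exp]
  refine hfin.congr' ?_
  filter_upwards [Filter.eventually_gt_atTop 0] with b hb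
  have hs2 := Real.sq_sqrt hb.le
  have hsp := Real.sqrt_pos.mpr hb
  have e0 : 1 - Complex.I * (Real.sqrt b / b : ℝ) * x = 1 + z b := by rw [hz]; ring
  have hne : 1 + z b ≠ 0 := by
    intro h
    have := congrArg Complex.re h
    simp [hz] at this
  have hbz : (b : ℂ) * z b = -(Complex.I * (Real.sqrt b : ℝ) * x) := by
    rw [hz]; simp only
    have hb' : (b : ℂ) ≠ 0 := by exact_mod_cast hb.ne'
    push_cast; field_simp
  have hbz2 : (b : ℂ) * z b ^ 2 = - (x : ℂ) ^ 2 := by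
    rw [hz]; simp only [hsb b hb]
    have hb' : ((Real.sqrt b : ℝ) : ℂ) ≠ 0 := by exact_mod_cast hsp.ne'
    nth_rewrite 1 [← hs2]
    push_cast; field_simp
    rw [Complex.I_sq]
    ring
  unfold Gf
  rw [e0, Complex.cpow_def_of_ne_zero hne, ← Complex.exp_add, hr]
  congr 1
  simp only [hT]
  rw [← hbz]
  push_cast
  linear_combination (-(1 : ℂ) / 2) * hbz2

/-- Gaussian Mehta integral (normalised). -/
noncomputable def Mg (N : ℕ) (γ : ℝ) : ℝ :=
  ∫ y : Fin N → ℝ, wt γ 0 y * ∏ j, Real.exp (-(y j ^ 2) / 2)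

lemma lim_G {N : ℕ} {γ a : ℝ} (hγ : 0 < γ) (ha0 : 0 < a) (ha : 2 * γ * ((N : ℝ) - 1) + 1 < a) :
    Filter.Tendsto (fun b : ℝ => ∫ y : Fin N → ℝ, (wt γ 0 y : ℂ) * ∏ j, Gf b (Real.sqrt b) (y j))
      Filter.atTop (nhds (Mg N γ : ℂ)) := by
  obtain ⟨C, hC, hw⟩ := wt_bound (N := N) hγ
  obtain ⟨K, hK, hE⟩ := Gf_bound ha0
  have hM : (Mg N γ : ℂ) = ∫ y : Fin N → ℝ, (wt γ 0 y : ℂ) * ∏ j, ((Real.exp (-(y j ^ 2) / 2) : ℝ) : ℂ) := by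
    unfold Mg
    rw [← integral_complex_ofReal]
    congr 1; ext y; push_cast; rfl
  rw [hM]
  refine tendsto_integral_filter_of_dominated_convergence (fun u => C * K ^ N * Dom γ a u) ?_ ?_
    ((Dom_integrable ha).const_mul _) ?_
  · refine Filter.Eventually.of_forall fun b => Continuous.aestronglyMeasurable ?_
    refine (Complex.continuous_ofReal.comp (wt_continuous hγ 0)).mul
      (continuous_finsetProd _ fun j _ => (Gf_continuous b _).comp (continuous_apply j))
  · filter_upwards [Filter.eventually_ge_atTop a] with b hb
    refine Filter.Eventually.of_forall fun u => ?_
    refine prod_E_bound a C (fun _ x => Gf b (Real.sqrt b) x) K (fun j x => hE b hb x) _ u hC.le ?_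
    rw [abs_of_nonneg (wt_nonneg γ le_rfl u)]
    exact hw 0 le_rfl zero_le_one u
  · refine Filter.Eventually.of_forall fun u => ?_
    exact (tendsto_finsetProd _ fun j _ => Gf_tendsto (u j)).const_mul _

lemma Mg_integrable {N : ℕ} {γ a : ℝ} (hγ : 0 < γ) (ha0 : 0 < a) (ha : 2 * γ * ((N : ℝ) - 1) + 1 < a) :
    Integrable fun y : Fin N → ℝ => wt γ 0 y * ∏ j, Real.exp (-(y j ^ 2) / 2) := by
  obtain ⟨C, hC, hw⟩ := wt_bound (N := N) hγ
  obtain ⟨K, hK, hE⟩ := Gf_bound ha0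
  refine ((Dom_integrable ha).const_mul (C * K ^ N)).mono' ?_ (Filter.Eventually.of_forall fun u => ?_)
  · exact ((wt_continuous hγ 0).mul (by fun_prop)).aestronglyMeasurable
  · have := prod_E_bound a C (fun _ x => ((Real.exp (-(x ^ 2) / 2) : ℝ) : ℂ)) K (fun j x => by
      refine le_of_tendsto (Gf_tendsto x).norm ?_
      filter_upwards [Filter.eventually_ge_atTop a] with b hb using hE b hb x) (wt γ 0 u) u hC.le (by
        rw [abs_of_nonneg (wt_nonneg γ le_rfl u)]
        exact hw 0 le_rfl zero_le_one u)
    rw [← Complex.ofReal_prod, ← Complex.ofReal_mul, Complex.norm_real] at this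
    exact this

lemma Mg_pos {N : ℕ} {γ a : ℝ} (hγ : 0 < γ) (ha0 : 0 < a) (ha : 2 * γ * ((N : ℝ) - 1) + 1 < a) :
    0 < Mg N γ := by
  unfold Mg
  have hc : Continuous fun y : Fin N → ℝ => wt γ 0 y * ∏ j, Real.exp (-(y j ^ 2) / 2) :=
    (wt_continuous hγ 0).mul (by fun_prop)
  refine integral_pos_of_integrable_nonneg_nonzero (x := fun j : Fin N => (j : ℝ)) hc
    (Mg_integrable hγ ha0 ha) (fun y => mul_nonneg (wt_nonneg γ le_rfl y) (by positivity)) ?_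
  refine mul_ne_zero ?_ (Finset.prod_ne_zero_iff.mpr fun j _ => (Real.exp_pos _).ne')
  unfold wt
  refine Finset.prod_ne_zero_iff.mpr fun i _ => Finset.prod_ne_zero_iff.mpr fun j hj => ?_
  have hij : j ≠ i := by simpa using hj
  have : ((j : ℝ) - (i : ℝ)) ≠ 0 := by
    rw [sub_ne_zero]; norm_cast; exact fun h => hij (Fin.ext h)
  positivity

section asymp
open Filter Topology

lemma sqrt_pow_prod {b : ℝ} (hb : 0 < b) (γ : ℝ) (N : ℕ) :
    (Real.sqrt b) ^ ((N : ℝ) + γ * N * ((N : ℝ) - 1)) =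
      ∏ j ∈ Finset.range N, (b ^ (1 / 2 : ℝ) * b ^ (γ * j)) := by
  induction N with
  | zero => simp
  | succ n ih =>
    rw [Finset.prod_range_succ, ← ih, Real.sqrt_eq_rpow, ← Real.rpow_mul hb.le, ← Real.rpow_mul hb.le,
      ← Real.rpow_add hb, ← Real.rpow_add hb]
    congr 1; push_cast; ring

lemma Hint_iter {N : ℕ} {γ a : ℝ} (hγ : 0 < γ) (ha0 : 0 < a)
    (ha : 2 * γ * ((N : ℝ) - 1) + 1 < a) (c : ℝ) (hc : 0 < c) (n : ℕ) :
    Hint N γ a c = ((∏ k ∈ Finset.range n, ∏ j ∈ Finset.range N, (a + k - γ * j) : ℝ) : ℂ) *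
      Hint N γ (a + n) c := by
  induction n with
  | zero => simp
  | succ n ih =>
    rw [ih, Finset.prod_range_succ, Hint_rec (a := a + n) hγ (by positivity) hc
      (by have : (0 : ℝ) ≤ n := by positivity
          linarith)]
    push_cast
    rw [← add_assoc]; ring

lemma ratio_tendsto (a : ℝ) :
    Tendsto (fun n : ℕ => (a + n + 1) / (n : ℝ)) atTop (𝓝 1) := by
  have h := (tendsto_const_div_atTop_nhds_zero_nat (a + 1)).add_const (1 : ℝ)
  rw [zero_add] at h
  refine h.congr' ?_
  filter_upwards [eventually_gt_atTop 0] with n hn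
  have : (n : ℝ) ≠ 0 := by exact_mod_cast hn.ne'
  field_simp; ring

/-- Stirling-type auxiliary limit. -/
lemma S_tendsto {a : ℝ} (ha : 0 < a) :
    Tendsto (fun n : ℕ => (n : ℝ) ^ a * (n.factorial : ℝ) * (a + n + 1) ^ (1 / 2 : ℝ) *
      ((a + n + 1) ^ (-(a + n + 1)) * Real.exp (a + n + 1))) atTop (𝓝 (Real.sqrt (2 * Real.pi))) := by
  have h1 : Tendsto (fun n : ℕ => (n.factorial : ℝ) / (Real.sqrt (2 * n * Real.pi) * (n / Real.exp 1) ^ n))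
      atTop (𝓝 1) := by
    have := (Asymptotics.isEquivalent_iff_tendsto_one ?_).mp Stirling.factorial_isEquivalent_stirling
    · exact this
    · filter_upwards [eventually_gt_atTop 0] with n hn
      positivity
  have h2 : Tendsto (fun n : ℕ => ((a + n + 1) / (n : ℝ)) ^ n) atTop (𝓝 (Real.exp (a + 1))) := by
    refine (Real.tendsto_one_add_div_pow_exp (a + 1)).congr' ?_
    filter_upwards [eventually_gt_atTop 0] with n hn
    have : (n : ℝ) ≠ 0 := by exact_mod_cast hn.ne'
    congr 1; field_simp; ring
  have h3 : Tendsto (fun n : ℕ => ((a + n + 1) / (n : ℝ)) ^ (a + 1 / 2)) atTop (𝓝 1) := by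
    have := (ratio_tendsto a).rpow_const (p := a + 1 / 2) (Or.inl one_ne_zero)
    rwa [Real.one_rpow] at this
  have h4 := (((h1.mul_const (Real.sqrt (2 * Real.pi))).mul_const (Real.exp (a + 1))).div h2
    (Real.exp_pos _).ne').div h3 one_ne_zero
  have e : 1 * Real.sqrt (2 * Real.pi) * Real.exp (a + 1) / Real.exp (a + 1) / 1 =
      Real.sqrt (2 * Real.pi) := by
    have := (Real.exp_pos (a + 1)).ne'
    field_simp
  rw [e] at h4
  refine h4.congr' ?_
  filter_upwards [eventually_gt_atTop 0] with n hn
  have hn' : (0 : ℝ) < n := by exact_mod_cast hn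
  have hb : 0 < a + n + 1 := by positivity
  simp only [Pi.div_apply]
  have e1 : Real.sqrt (2 * n * Real.pi) = Real.sqrt (2 * Real.pi) * (n : ℝ) ^ (1 / 2 : ℝ) := by
    rw [← Real.sqrt_eq_rpow, ← Real.sqrt_mul (by positivity)]; congr 1; ring
  have e2 : ((a + n + 1) / (n : ℝ)) ^ (a + 1 / 2) =
      (a + n + 1) ^ (a + 1 / 2) / ((n : ℝ) ^ a * (n : ℝ) ^ (1 / 2 : ℝ)) := by
    rw [Real.div_rpow hb.le hn'.le, Real.rpow_add hn']
  have e3 : (a + n + 1) ^ (-(a + n + 1)) =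
      ((a + n + 1) ^ n * (a + n + 1) ^ (a + 1 / 2) * (a + n + 1) ^ (1 / 2 : ℝ))⁻¹ := by
    rw [← Real.rpow_natCast (a + n + 1) n, ← Real.rpow_add hb, ← Real.rpow_add hb, ← Real.rpow_neg hb.le]
    congr 1; ring
  have e4 : Real.exp (a + n + 1) = Real.exp (a + 1) * (Real.exp 1) ^ n := by
    rw [← Real.exp_nat_mul, ← Real.exp_add]; congr 1; ring
  rw [e1, e2, e3, e4, div_pow, div_pow]
  have p1 : (0 : ℝ) < Real.sqrt (2 * Real.pi) := by positivity
  have p2 : (0 : ℝ) < (n : ℝ) ^ (1 / 2 : ℝ) := by positivity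
  have p3 : (0 : ℝ) < (n : ℝ) ^ a := by positivity
  have p4 : (0 : ℝ) < (a + n + 1) ^ (a + 1 / 2) := by positivity
  have p5 : (0 : ℝ) < (a + n + 1) ^ (1 / 2 : ℝ) := by positivity
  generalize (n : ℝ) ^ (1 / 2 : ℝ) = x2 at *
  generalize (n : ℝ) ^ a = x3 at *
  generalize (a + n + 1) ^ (a + 1 / 2) = x4 at *
  generalize (a + n + 1) ^ (1 / 2 : ℝ) = x5 at *
  field_simp

lemma Hint_value {N : ℕ} {γ a : ℝ} (hγ : 0 < γ) (ha0 : 0 < a)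
    (ha : 2 * γ * ((N : ℝ) - 1) + 1 < a) :
    Hint N γ a a * ((∏ j ∈ Finset.range N, Real.Gamma (a - γ * j) : ℝ) : ℂ) =
      ((Real.sqrt (2 * Real.pi) ^ N : ℝ) : ℂ) * (Mg N γ : ℂ) := by
  have hpos : ∀ j ∈ Finset.range N, 0 < a - γ * j := by
    intro j hj
    have h1 : (j : ℝ) + 1 ≤ N := by exact_mod_cast Finset.mem_range.mp hj
    have h0 : (0 : ℝ) ≤ j := by positivity
    nlinarith
  have hb : Tendsto (fun n : ℕ => a + n + 1) atTop atTop :=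
    tendsto_atTop_add_const_right _ _ (tendsto_atTop_add_const_left _ _ tendsto_natCast_atTop_atTop)
  have hI := (lim_G (N := N) hγ ha0 ha).comp hb
  have hG : Tendsto (fun n => ∏ j ∈ Finset.range N, Real.GammaSeq (a - γ * j) n) atTop
      (𝓝 (∏ j ∈ Finset.range N, Real.Gamma (a - γ * j))) :=
    tendsto_finsetProd _ fun j _ => Real.GammaSeq_tendsto_Gamma _
  have hL := ((Complex.continuous_ofReal.tendsto _).comp hG).const_mul (Hint N γ a a)
  have hR0 : Tendsto (fun n : ℕ => ∏ j ∈ Finset.range N,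
      (((a + n + 1) / (n : ℝ)) ^ (γ * j) * ((n : ℝ) ^ a * (n.factorial : ℝ) * (a + n + 1) ^ (1 / 2 : ℝ) *
      ((a + n + 1) ^ (-(a + n + 1)) * Real.exp (a + n + 1))))) atTop
      (𝓝 (Real.sqrt (2 * Real.pi) ^ N)) := by
    have : Real.sqrt (2 * Real.pi) ^ N = ∏ j ∈ Finset.range N, (1 * Real.sqrt (2 * Real.pi)) := by simp
    rw [this]
    refine tendsto_finsetProd _ fun j _ => Tendsto.mul ?_ (S_tendsto ha0)
    have := (ratio_tendsto a).rpow_const (p := γ * j) (Or.inl one_ne_zero)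
    rwa [Real.one_rpow] at this
  have hR := ((Complex.continuous_ofReal.tendsto _).comp hR0).mul hI
  refine tendsto_nhds_unique_of_eventuallyEq hL hR ?_
  filter_upwards [eventually_gt_atTop 0] with n hn
  have hn' : (0 : ℝ) < n := by exact_mod_cast hn
  have hbp : 0 < a + n + 1 := by positivity
  have hb2 : 2 * γ * ((N : ℝ) - 1) + 1 < a + n + 1 := by linarith
  have e1 := Hint_iter hγ ha0 ha a ha0 (n + 1)
  have e2 : a + ((n + 1 : ℕ) : ℝ) = a + n + 1 := by push_cast; ring
  rw [e2, Hint_const hγ hbp.le hb2 ha0 hbp, Hint_scale γ hbp (Real.sqrt_pos.mpr hbp)] at e1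
  simp only [Function.comp_apply]
  rw [e1]
  have e3 : (∏ k ∈ Finset.range (n + 1), ∏ j ∈ Finset.range N, (a + k - γ * j)) *
      ∏ j ∈ Finset.range N, Real.GammaSeq (a - γ * j) n =
      ∏ j ∈ Finset.range N, ((n : ℝ) ^ (a - γ * j) * (n.factorial : ℝ)) := by
    rw [Finset.prod_comm, ← Finset.prod_mul_distrib]
    refine Finset.prod_congr rfl fun j hj => ?_
    unfold Real.GammaSeq
    have e4 : ∏ k ∈ Finset.range (n + 1), (a + k - γ * j) =
        ∏ k ∈ Finset.range (n + 1), (a - γ * j + k) :=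
      Finset.prod_congr rfl fun k _ => by ring
    rw [e4, mul_div_cancel₀]
    refine Finset.prod_ne_zero_iff.mpr fun k _ => ?_
    have := hpos j hj
    positivity
  have e5 : (∏ j ∈ Finset.range N, ((n : ℝ) ^ (a - γ * j) * (n.factorial : ℝ))) *
      (Real.sqrt (a + n + 1) ^ ((N : ℝ) + γ * N * ((N : ℝ) - 1)) *
        ((a + n + 1) ^ (-(a + n + 1)) * Real.exp (a + n + 1)) ^ N) =
      ∏ j ∈ Finset.range N,
      (((a + n + 1) / (n : ℝ)) ^ (γ * j) * ((n : ℝ) ^ a * (n.factorial : ℝ) * (a + n + 1) ^ (1 / 2 : ℝ) *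
      ((a + n + 1) ^ (-(a + n + 1)) * Real.exp (a + n + 1)))) := by
    rw [sqrt_pow_prod hbp]
    have : ((a + n + 1) ^ (-(a + n + 1)) * Real.exp (a + n + 1)) ^ N =
      ∏ j ∈ Finset.range N, ((a + n + 1) ^ (-(a + n + 1)) * Real.exp (a + n + 1)) := by simp
    rw [this, ← Finset.prod_mul_distrib, ← Finset.prod_mul_distrib]
    refine Finset.prod_congr rfl fun j hj => ?_
    rw [Real.div_rpow hbp.le hn'.le, Real.rpow_sub hn']
    ring
  rw [← e5, ← e3]
  push_cast
  ring

end asymp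

lemma den_eq (N : ℕ) {γ : ℝ} (hγ : 0 < γ) :
    Real.sqrt γ ^ ((N : ℝ) + γ * N * ((N : ℝ) - 1)) *
      (∫ l : Fin N → ℝ, (∏ i : Fin N, ∏ j ∈ Finset.Ioi i, |l j - l i| ^ (2 * γ)) *
            Real.exp (-(γ / 2) * ∑ j, (l j) ^ 2)) = Mg N γ := by
  have hs : 0 < Real.sqrt γ := Real.sqrt_pos.mpr hγ
  have h := Measure.integral_comp_smul (volume : Measure (Fin N → ℝ))
    (fun y : Fin N → ℝ => wt γ 0 y * ∏ j, Real.exp (-(y j ^ 2) / 2)) (Real.sqrt γ)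
  have h2 : ∀ l : Fin N → ℝ, wt γ 0 (Real.sqrt γ • l) * ∏ j, Real.exp (-((Real.sqrt γ • l) j ^ 2) / 2) =
      Real.sqrt γ ^ (γ * N * ((N : ℝ) - 1)) *
        ((∏ i : Fin N, ∏ j ∈ Finset.Ioi i, |l j - l i| ^ (2 * γ)) *
            Real.exp (-(γ / 2) * ∑ j, (l j) ^ 2)) := by
    intro l
    rw [wt_smul γ hs, wt_zero_eq, ← Real.exp_sum, mul_assoc]
    congr 3
    rw [Finset.mul_sum]
    refine Finset.sum_congr rfl fun j _ => ?_
    rw [Pi.smul_apply, smul_eq_mul, mul_pow, Real.sq_sqrt hγ.le]; ring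
  simp_rw [h2] at h
  rw [integral_const_mul, Module.finrank_fin_fun, abs_of_pos (by positivity), smul_eq_mul] at h
  rw [Real.rpow_add hs, Real.rpow_natCast, mul_assoc, h, mul_inv_cancel_left₀ (by positivity)]
  rfl

lemma num_eq (N : ℕ) {γ t : ℝ} (hγ : 0 < γ) (ht : 0 < t) :
    (∫ l : Fin N → ℝ,
        (∏ i : Fin N, ∏ j ∈ Finset.Ioi i, ((|l j - l i| ^ (2 * γ) : ℝ) : ℂ)) *
          ∏ j : Fin N,
            Complex.exp (-(Complex.I * γ * (l j) / Real.sqrt t)) *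
              (1 - Complex.I * Real.sqrt t * (l j)) ^ ((-(γ / t) : ℝ) : ℂ)) =
    ∫ y : Fin N → ℝ, (wt γ 0 y : ℂ) * ∏ j, Gf (γ / t) (γ / Real.sqrt t) (y j) := by
  congr 1; ext l
  rw [wt_zero_eq]
  push_cast
  congr 1
  refine Finset.prod_congr rfl fun j _ => ?_
  unfold Gf
  have h1 : γ / Real.sqrt t / (γ / t) = Real.sqrt t := by
    have := Real.sq_sqrt ht.le
    have := Real.sqrt_pos.mpr ht
    field_simp
    linarith
  rw [h1]
  congr 2
  · push_cast; ring
  · push_cast; rfl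

/-- For `N ≥ 1`, `γ > 0` and `t > 0` with `γ/t > 2γ(N-1) + 1`:
`W_γ(N,t) = (√(2π) e^{-γ/t} (γ/t)^{γ/t - ((N-1)γ+1)/2})^N ∏_{j=0}^{N-1} 1/Γ(γ/t - γj)`. -/
theorem stmt3 (N : ℕ) (hN : 1 ≤ N) (γ t : ℝ) (hγ : 0 < γ) (ht : 0 < t)
    (hconv : 2 * γ * ((N : ℝ) - 1) + 1 < γ / t) :
    W γ N t =
      (((Real.sqrt (2 * Real.pi) * Real.exp (-(γ / t)) *
            (γ / t) ^ (γ / t - (((N : ℝ) - 1) * γ + 1) / 2) : ℝ) : ℂ)) ^ N *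
        ∏ j ∈ Finset.range N, ((1 / Real.Gamma (γ / t - γ * j) : ℝ) : ℂ) := by
  have ha0 : 0 < γ / t := by positivity
  unfold W
  rw [num_eq N hγ ht]
  have hs : 0 < Real.sqrt γ := Real.sqrt_pos.mpr hγ
  have hst : 0 < Real.sqrt t := Real.sqrt_pos.mpr ht
  have hc : 0 < γ / Real.sqrt t := by positivity
  have hden := den_eq N hγ
  have hsc := Hint_scale (N := N) γ ha0 hc
  have hv := Hint_value hγ ha0 hconv
  have hM := Mg_pos hγ ha0 hconv
  have hΓ : ∀ j ∈ Finset.range N, 0 < Real.Gamma (γ / t - γ * j) := by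
    intro j hj
    apply Real.Gamma_pos_of_pos
    have h1 : (j : ℝ) + 1 ≤ N := by exact_mod_cast Finset.mem_range.mp hj
    have h0 : (0 : ℝ) ≤ j := by positivity
    nlinarith
  have hP : 0 < ∏ j ∈ Finset.range N, Real.Gamma (γ / t - γ * j) := Finset.prod_pos hΓ
  rw [hsc] at hv
  rw [← hden] at hv hM
  set D : ℝ := ∫ l : Fin N → ℝ, (∏ i : Fin N, ∏ j ∈ Finset.Ioi i, |l j - l i| ^ (2 * γ)) *
            Real.exp (-(γ / 2) * ∑ j, (l j) ^ 2) with hD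
  have hDpos : 0 < D := pos_of_mul_pos_right hM (by positivity)
  have hRHS : ∏ j ∈ Finset.range N, ((1 / Real.Gamma (γ / t - γ * j) : ℝ) : ℂ) =
      1 / ((∏ j ∈ Finset.range N, Real.Gamma (γ / t - γ * j) : ℝ) : ℂ) := by
    push_cast; simp
  rw [hRHS]
  set P : ℝ := ∏ j ∈ Finset.range N, Real.Gamma (γ / t - γ * j) with hPdef
  generalize hX : (∫ y : Fin N → ℝ, (wt γ 0 y : ℂ) * ∏ j, Gf (γ / t) (γ / Real.sqrt t) (y j)) = X at *
  have hDc : (D : ℂ) ≠ 0 := by exact_mod_cast hDpos.ne'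
  have hPc : (P : ℂ) ≠ 0 := by exact_mod_cast hP.ne'
  set e : ℝ := (N : ℝ) + γ * N * ((N : ℝ) - 1) with he
  set A : ℝ := (γ / Real.sqrt t) ^ e * ((γ / t) ^ (-(γ / t)) * Real.exp (γ / t)) ^ N with hA
  have hApos : 0 < A := by positivity
  have hAc : (A : ℂ) ≠ 0 := by exact_mod_cast hApos.ne'
  set B : ℝ := (Real.sqrt (2 * Real.pi) * Real.exp (-(γ / t)) *
            (γ / t) ^ (γ / t - (((N : ℝ) - 1) * γ + 1) / 2)) with hB
  have key : A * B ^ N = Real.sqrt (2 * Real.pi) ^ N * Real.sqrt γ ^ e := by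
    have h1 : Real.sqrt γ ^ e = (γ / Real.sqrt t) ^ e * ((γ / t) ^ (-(1 + ((N : ℝ) - 1) * γ) / 2)) ^ N := by
      rw [← Real.rpow_natCast, ← Real.rpow_mul ha0.le]
      have h2 : Real.sqrt γ = (γ / Real.sqrt t) * (γ / t) ^ (-(1 / 2) : ℝ) := by
        rw [Real.rpow_neg ha0.le, ← Real.sqrt_eq_rpow, Real.sqrt_div hγ.le]
        have := Real.sq_sqrt hγ.le
        field_simp
        exact this
      rw [h2, Real.mul_rpow hc.le (by positivity), ← Real.rpow_mul ha0.le]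
      congr 2; rw [he]; ring
    rw [h1, hA, hB, mul_assoc, ← mul_pow, mul_left_comm (Real.sqrt (2 * Real.pi) ^ N), ← mul_pow]
    congr 2
    have h3 : (γ / t) ^ (-(1 + ((N : ℝ) - 1) * γ) / 2) =
        (γ / t) ^ (-(γ / t)) * (γ / t) ^ (γ / t - (((N : ℝ) - 1) * γ + 1) / 2) := by
      rw [← Real.rpow_add ha0]; congr 1; ring
    rw [h3, Real.exp_neg]
    have := (Real.exp_pos (γ / t)).ne'
    field_simp
  have keyc : (A : ℂ) * (B : ℂ) ^ N = ((Real.sqrt (2 * Real.pi) ^ N : ℝ) : ℂ) * ((Real.sqrt γ ^ e : ℝ) : ℂ) := by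
    rw [← Complex.ofReal_mul, ← key]; push_cast; rfl
  rw [mul_one_div, div_eq_div_iff hDc hPc]
  apply mul_left_cancel₀ hAc
  rw [Complex.ofReal_mul (Real.sqrt γ ^ e) D] at hv
  linear_combination hv - D * keyc
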